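/- A \emph{Morse gauge} is a non-decreasing continuous function $M:[1,\infty)\to[0,\infty)$. For $Q\ge 1$, a $Q$-quasi-geodesic is a continuous map $\gamma:I\to X$ from an interval with $|t-s|/Q-Q\le d(\gamma(s),\gamma(t))\le Q|t-s|+Q$ for all $s,t\in I$; it is \emph{$M$-Morse} if for every $Q'\ge1$ every $Q'$-quasi-geodesic with endpoints $\gamma(s),\gamma(t)$ lies in the closed $M(Q')$-neighbourhood of $\gamma[s,t]$, and \emph{Morse} if it is $M$-Morse for some Morse gauge $M$. A geodesic ray is an isometric embedding of $[0,\infty)$. A space $X$ satisfies the \emph{Morse local-to-global property} if for all $Q\ge 1$ and Morse gauges $M$ there exist $L>0$, $Q'\ge1$ and a Morse gauge $M'$ such that every path, all of whose subpaths $p[s,t]$ with $|t-s|\le L$ are $M$-Morse $Q$-quasi-geodesics, is an $M'$-Morse $Q'$-quasi-geodesic. A geodesic ray $\gamma$ is \emph{strongly contracting} if there is $C$ such that for every point $x$ the closest-point projection to $\gamma$ of the ball of radius $d(x,\gamma)$ around $x$ has diameter at most $C$. An isometric action is \emph{geometric} if it is proper and cocompact. Let $G$ be a finitely generated group acting geometrically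 on a proper geodesic metric space $X$ with basepoint $x_0$. Let $\mathcal M(X)$ denote the set of Morse geodesic rays in $X$ whose starting point lies in the orbit $G\cdot x_0$, let $Z$ be a metrizable topological space on which $G$ acts by homeomorphisms, and let $\rho:\mathcal M(X)\to Z$ be a map. Assume: (a) $X$ is not Gromov hyperbolic, $X$ satisfies the Morse local-to-global property, and there exists a geodesic metric space $X'$ on which $G$ acts geometrically and which contains a strongly contracting geodesic ray; (b) whenever $\gamma_1,\gamma_2\in\mathcal M(X)$ are not at bounded Hausdorff distance from one another, $\rho(\gamma_1)\ne\rho(\gamma_2)$; (c) $\rho(g\cdot\gamma)=g\cdot\rho(\gamma)$ for all $g\in G$ and $\gamma\in\mathcal M(X)$; (d) for every Morse gauge $M$, the image under $\rho$ of the set of $M$-Morse geodesic rays starting at $x_0$ is compact. Let $\mu$ be a probability measure on $G$ whose support generates $G$ as a semigroup. Then every Borel probability measure $\nu$ on $Z$ that is $\mu$-stationary, i.e. $\nu(U)=\sum_{g\in G}\mu(g)\,\nu(g^{-1}U)$ for all Borel sets $U\subseteq Z$, satisfies $\nu(\rho(\mathcal M(X)))=0$. -/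

import Mathlib

open scoped NNReal ENNReal Pointwise

namespace MorseLTG

/-- A Morse gauge: a non-decreasing continuous function `[1, ∞) → [0, ∞)`
(the values of `M` outside `[1, ∞)` are never used). -/
def IsMorseGauge (M : ℝ → ℝ) : Prop :=
  MonotoneOn M (Set.Ici 1) ∧ ContinuousOn M (Set.Ici 1) ∧ ∀ t : ℝ, 1 ≤ t → 0 ≤ M t

section Space

variable {X : Type*} [MetricSpace X]

/-- The restriction of `γ` to `I ⊆ ℝ` is a (continuous) `Q`-quasi-geodesic. -/
def QGeoOn (Q : ℝ) (I : Set ℝ) (γ : ℝ → X) : Prop :=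
  ContinuousOn γ I ∧ ∀ s ∈ I, ∀ t ∈ I,
    |t - s| / Q - Q ≤ dist (γ s) (γ t) ∧ dist (γ s) (γ t) ≤ Q * |t - s| + Q

/-- The restriction of `γ` to `I` is `M`-Morse: every `Q`-quasi-geodesic with endpoints
`γ s` and `γ t` stays in the closed `M Q`-neighbourhood of `γ[s,t]`. -/
def MorseOn (M : ℝ → ℝ) (I : Set ℝ) (γ : ℝ → X) : Prop :=
  ∀ Q : ℝ, 1 ≤ Q → ∀ s ∈ I, ∀ t ∈ I, s ≤ t →
    ∀ (p : ℝ → X) (a b : ℝ), a ≤ b → QGeoOn Q (Set.Icc a b) p →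
      p a = γ s → p b = γ t →
      ∀ u ∈ Set.Icc a b, ∃ v ∈ Set.Icc s t, dist (p u) (γ v) ≤ M Q

/-- The restriction of `p` to `I` is `L`-locally an `M`-Morse `Q`-quasi-geodesic. -/
def LocMorseQGeoOn (Q : ℝ) (M : ℝ → ℝ) (L : ℝ) (I : Set ℝ) (p : ℝ → X) : Prop :=
  ∀ s ∈ I, ∀ t ∈ I, s ≤ t → t - s ≤ L →
    QGeoOn Q (Set.Icc s t) p ∧ MorseOn M (Set.Icc s t) p

/-- `γ : [0, ℓ] → X` is a geodesic segment of length `ℓ ≥ 0` from `x` to `y`. -/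
def IsGeodesicSegment (γ : ℝ → X) (ℓ : ℝ) (x y : X) : Prop :=
  0 ≤ ℓ ∧ γ 0 = x ∧ γ ℓ = y ∧
    ∀ s ∈ Set.Icc 0 ℓ, ∀ t ∈ Set.Icc 0 ℓ, dist (γ s) (γ t) = |t - s|

/-- `A` is `C`-contracting: for every `x`, any two closest-point projections to `A` of points
of the ball of radius `d(x, A)` around `x` are at distance at most `C`. -/
def ContractingSet (C : ℝ) (A : Set X) : Prop :=
  ∀ x : X, ∀ y₁ ∈ Metric.ball x (Metric.infDist x A),
    ∀ y₂ ∈ Metric.ball x (Metric.infDist x A), ∀ p₁ ∈ A, ∀ p₂ ∈ A,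
      dist y₁ p₁ = Metric.infDist y₁ A → dist y₂ p₂ = Metric.infDist y₂ A → dist p₁ p₂ ≤ C

/-- A geodesic ray: an isometric embedding `γ : [0, ∞) → X`. It is strongly contracting if its
image is `C`-contracting for some `C`. -/
def IsStronglyContractingRay (γ : ℝ≥0 → X) : Prop :=
  Isometry γ ∧ ∃ C : ℝ, 0 ≤ C ∧ ContractingSet C (Set.range γ)

/-- `γ : [0, ∞) → X` is an `M`-Morse geodesic ray. -/
def IsMorseRayWith (M : ℝ → ℝ) (γ : ℝ≥0 → X) : Prop :=
  Isometry γ ∧ MorseOn M (Set.Ici 0) (fun t : ℝ => γ t.toNNReal)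

/-- `γ : [0, ∞) → X` is a Morse geodesic ray. -/
def IsMorseRay (γ : ℝ≥0 → X) : Prop :=
  ∃ M : ℝ → ℝ, IsMorseGauge M ∧ IsMorseRayWith M γ

/-- The set of `M`-Morse geodesic rays starting at `x₀`. -/
def morseRaysFrom (M : ℝ → ℝ) (x₀ : X) : Set (ℝ≥0 → X) :=
  {γ | γ 0 = x₀ ∧ IsMorseRayWith M γ}

end Space

/-- `X` is a geodesic metric space. -/
def IsGeodesicSpace (X : Type*) [MetricSpace X] : Prop :=
  ∀ x y : X, ∃ (γ : ℝ → X) (ℓ : ℝ), IsGeodesicSegment γ ℓ x y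

/-- Gromov hyperbolicity: geodesic triangles are uniformly thin. -/
def GromovHyperbolic (X : Type*) [MetricSpace X] : Prop :=
  ∃ δ : ℝ, 0 ≤ δ ∧
    ∀ (x y z : X) (γ₁ γ₂ γ₃ : ℝ → X) (ℓ₁ ℓ₂ ℓ₃ : ℝ),
      IsGeodesicSegment γ₁ ℓ₁ x y → IsGeodesicSegment γ₂ ℓ₂ y z →
      IsGeodesicSegment γ₃ ℓ₃ z x →
      ∀ s ∈ Set.Icc 0 ℓ₁,
        ∃ p ∈ γ₂ '' Set.Icc 0 ℓ₂ ∪ γ₃ '' Set.Icc 0 ℓ₃, dist (γ₁ s) p ≤ δ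

/-- The Morse local-to-global property. -/
def MLTG (X : Type*) [MetricSpace X] : Prop :=
  ∀ Q : ℝ, 1 ≤ Q → ∀ M : ℝ → ℝ, IsMorseGauge M →
    ∃ (L Q' : ℝ) (M' : ℝ → ℝ), 0 < L ∧ 1 ≤ Q' ∧ IsMorseGauge M' ∧
      ∀ I : Set ℝ, I.OrdConnected → ∀ p : ℝ → X,
        LocMorseQGeoOn Q M L I p → QGeoOn Q' I p ∧ MorseOn M' I p

/-- The action of `G` on `X` is geometric: isometric, (metrically) proper and cocompact. -/
def IsGeometricAction (G X : Type*) [Group G] [MetricSpace X] [MulAction G X] : Prop :=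
  (∀ g : G, Isometry (fun x : X => g • x)) ∧
  (∀ (x : X) (r : ℝ), {g : G | dist x (g • x) ≤ r}.Finite) ∧
  (∃ K : Set X, IsCompact K ∧ ∀ x : X, ∃ g : G, ∃ k ∈ K, x = g • k)

/-- The set `𝓜(X)` of Morse geodesic rays in `X` starting at a point of the orbit `G · x₀`. -/
def orbitMorseRays (G : Type*) {X : Type*} [Group G] [MetricSpace X] [MulAction G X] (x₀ : X) :
    Set (ℝ≥0 → X) :=
  {γ | γ 0 ∈ MulAction.orbit G x₀ ∧ IsMorseRay γ}

/-- `ν` is `μ`-stationary: `ν(U) = ∑ g, μ(g) ν(g⁻¹ U)` for every Borel set `U`. -/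
def IsStationary {G Z : Type*} [Group G] [MulAction G Z] [MeasurableSpace Z]
    (μ : PMF G) (ν : MeasureTheory.Measure Z) : Prop :=
  ∀ U : Set Z, MeasurableSet U → ν U = ∑' g : G, μ g * ν (g⁻¹ • U)

end MorseLTG

namespace MorseLTG

section Coarse

variable {X : Type*} [MetricSpace X]

/-- `S` is the image of a (not necessarily continuous) quasi-geodesic from `x` to `y`. -/
def QPath (Q : ℝ) (x y : X) (S : Set X) : Prop :=
  ∃ (a b : ℝ) (q : ℝ → X), a ≤ b ∧ q a = x ∧ q b = y ∧ S = q '' Set.Icc a b ∧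
    ∀ s ∈ Set.Icc a b, ∀ t ∈ Set.Icc a b,
      |t - s| ≤ Q * dist (q s) (q t) + Q ∧ dist (q s) (q t) ≤ Q * |t - s| + Q

/-- `S` is contained in the closed `D`-neighbourhood of `T`. -/
def Near (D : ℝ) (S T : Set X) : Prop := ∀ x ∈ S, ∃ y ∈ T, dist x y ≤ D

/-- `S` is (the image of) a geodesic from `x` to `y`. -/
def Seg (x y : X) (S : Set X) : Prop :=
  ∃ (γ : ℝ → X) (ℓ : ℝ), IsGeodesicSegment γ ℓ x y ∧ S = γ '' Set.Icc 0 ℓ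

/-- Any two `Q`-quasi-geodesics from `u` to `v` are `D`-close. -/
def RigidAt (Q D : ℝ) (u v : X) : Prop :=
  ∀ S S' : Set X, QPath Q u v S → QPath Q u v S' → Near D S S'

/-- The pair `(u, v)` is Morse, with gauge `N`: quasi-geodesics from `u` to `v` are uniformly
close to each other. -/
def Rigid (N : ℝ → ℝ) (u v : X) : Prop := ∀ Q, 1 ≤ Q → RigidAt Q (N Q) u v

theorem Near.mono {D D' : ℝ} {S T : Set X} (h : Near D S T) (hD : D ≤ D') : Near D' S T := by
  intro x hx
  obtain ⟨y, hy, hd⟩ := h x hx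
  exact ⟨y, hy, hd.trans hD⟩

theorem QPath.left_mem {Q : ℝ} {x y : X} {S : Set X} (h : QPath Q x y S) : x ∈ S := by
  obtain ⟨a, b, q, hab, rfl, rfl, rfl, -⟩ := h
  exact ⟨a, Set.left_mem_Icc.2 hab, rfl⟩

theorem QPath.right_mem {Q : ℝ} {x y : X} {S : Set X} (h : QPath Q x y S) : y ∈ S := by
  obtain ⟨a, b, q, hab, rfl, rfl, rfl, -⟩ := h
  exact ⟨b, Set.right_mem_Icc.2 hab, rfl⟩

theorem QPath.mono {Q Q' : ℝ} {x y : X} {S : Set X} (h : QPath Q x y S) (hQ : Q ≤ Q') :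
    QPath Q' x y S := by
  obtain ⟨a, b, q, hab, hx, hy, hS, h⟩ := h
  refine ⟨a, b, q, hab, hx, hy, hS, fun s hs t ht => ?_⟩
  obtain ⟨h1, h2⟩ := h s hs t ht
  have h3 : Q * dist (q s) (q t) ≤ Q' * dist (q s) (q t) := by gcongr
  have h4 : Q * |t - s| ≤ Q' * |t - s| := by gcongr
  exact ⟨by linarith, by linarith⟩

theorem QPath.symm {Q : ℝ} {x y : X} {S : Set X} (h : QPath Q x y S) : QPath Q y x S := by
  obtain ⟨a, b, q, hab, hx, hy, hS, h⟩ := h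
  refine ⟨-b, -a, fun t => q (-t), by linarith, by simpa, by simpa, ?_, fun s hs t ht => ?_⟩
  · rw [hS]
    ext z
    constructor
    · rintro ⟨t, ht, rfl⟩
      exact ⟨-t, ⟨by linarith [ht.2], by linarith [ht.1]⟩, by simp⟩
    · rintro ⟨t, ht, rfl⟩
      exact ⟨-t, ⟨by linarith [ht.2], by linarith [ht.1]⟩, rfl⟩
  · have := h (-s) ⟨by linarith [hs.2], by linarith [hs.1]⟩ (-t)
      ⟨by linarith [ht.2], by linarith [ht.1]⟩
    rwa [show -t - -s = -(t - s) by ring, abs_neg] at this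

theorem QPath.split {Q : ℝ} {x y m : X} {S : Set X} (h : QPath Q x y S) (hm : m ∈ S) :
    ∃ S₁ S₂, S = S₁ ∪ S₂ ∧ QPath Q x m S₁ ∧ QPath Q m y S₂ := by
  obtain ⟨a, b, q, hab, hx, hy, rfl, h⟩ := h
  obtain ⟨c, hc, rfl⟩ := hm
  refine ⟨q '' Set.Icc a c, q '' Set.Icc c b, ?_,
    ⟨a, c, q, hc.1, hx, rfl, rfl, fun s hs t ht => h s ⟨hs.1, hs.2.trans hc.2⟩ t
      ⟨ht.1, ht.2.trans hc.2⟩⟩,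
    ⟨c, b, q, hc.2, rfl, hy, rfl, fun s hs t ht => h s ⟨hc.1.trans hs.1, hs.2⟩ t
      ⟨hc.1.trans ht.1, ht.2⟩⟩⟩
  rw [← Set.image_union, Set.Icc_union_Icc_eq_Icc hc.1 hc.2]

theorem QPath.exists_subpath {Q : ℝ} {x y u v : X} {S : Set X} (h : QPath Q x y S) (hu : u ∈ S)
    (hv : v ∈ S) : ∃ S' ⊆ S, QPath Q u v S' := by
  obtain ⟨S₁, S₂, rfl, h₁, h₂⟩ := h.split hu
  rcases hv with hv | hv
  · obtain ⟨T₁, T₂, rfl, -, h₄⟩ := h₁.split hv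
    exact ⟨T₂, fun z hz => Or.inl (Or.inr hz), h₄.symm⟩
  · obtain ⟨T₁, T₂, rfl, h₃, -⟩ := h₂.split hv
    exact ⟨T₁, fun z hz => Or.inr (Or.inl hz), h₃⟩

/-- Concatenation of quasi-geodesics which diverge linearly from their common endpoint. -/
theorem QPath.concat {Q K : ℝ} (hQ : 1 ≤ Q) (hK : 1 ≤ K) {x m y : X} {S T : Set X}
    (hS : QPath Q x m S) (hT : QPath Q m y T)
    (hsep : ∀ u ∈ S, ∀ v ∈ T, dist u m + dist m v ≤ K * dist u v + K) :
    QPath (3 * Q * K) x y (S ∪ T) := by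
  obtain ⟨a, b, p, hab, rfl, hpb, rfl, hp⟩ := hS
  obtain ⟨c, d, q, hcd, hqc, rfl, rfl, hq⟩ := hT
  set r : ℝ → X := fun t => if t ≤ b then p t else q (t - b + c) with hr
  have r1 : ∀ t, t ≤ b → r t = p t := fun t ht => by simp [hr, ht]
  have r2 : ∀ t, b ≤ t → r t = q (t - b + c) := fun t ht => by
    rcases ht.eq_or_lt with rfl | ht
    · simp [hr, hpb, hqc]
    · simp [hr, not_le.2 ht]
  have hQK : Q ≤ Q * K := by nlinarith
  have hQQ : Q ≤ 3 * Q * K := by nlinarith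
  have key : ∀ s t, a ≤ s → s ≤ b → b ≤ t → t ≤ b + (d - c) →
      t - s ≤ 3 * Q * K * dist (r s) (r t) + 3 * Q * K ∧
        dist (r s) (r t) ≤ 3 * Q * K * (t - s) + 3 * Q * K := by
    intro s t h1 h2 h3 h4
    rw [r1 s h2, r2 t h3]
    have e1 := hp s ⟨h1, h2⟩ b ⟨hab, le_rfl⟩
    have e2 := hq c ⟨le_rfl, hcd⟩ (t - b + c) ⟨by linarith, by linarith⟩
    rw [hpb, abs_of_nonneg (by linarith)] at e1
    rw [hqc, show t - b + c - c = t - b by ring, abs_of_nonneg (by linarith)] at e2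
    have e3 := hsep (p s) ⟨s, ⟨h1, h2⟩, rfl⟩ (q (t - b + c)) ⟨_, ⟨by linarith, by linarith⟩, rfl⟩
    have e4 := dist_triangle (p s) m (q (t - b + c))
    set D := dist (p s) (q (t - b + c)) with hD
    have hD0 : 0 ≤ D := dist_nonneg
    constructor
    · have : Q * (dist (p s) m + dist m (q (t - b + c))) ≤ Q * (K * D + K) := by gcongr
      have : 0 ≤ Q * K * D := by positivity
      nlinarith
    · have : Q * (t - s) ≤ 3 * Q * K * (t - s) := by
        apply mul_le_mul_of_nonneg_right hQQ; linarith
      nlinarith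
  refine ⟨a, b + (d - c), r, by linarith, r1 a hab, ?_, ?_, ?_⟩
  · rw [r2 _ (by linarith)]; congr 1; ring
  · ext z
    constructor
    · rintro (⟨t, ht, rfl⟩ | ⟨t, ht, rfl⟩)
      · exact ⟨t, ⟨ht.1, by linarith [ht.2]⟩, r1 t ht.2⟩
      · refine ⟨t - c + b, ⟨by linarith [ht.1], by linarith [ht.2]⟩, ?_⟩
        rw [r2 _ (by linarith [ht.1])]; congr 1; ring
    · rintro ⟨t, ht, rfl⟩
      rcases le_total t b with h | h
      · exact Or.inl ⟨t, ⟨ht.1, h⟩, (r1 t h).symm⟩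
      · exact Or.inr ⟨t - b + c, ⟨by linarith, by linarith [ht.2]⟩, (r2 t h).symm⟩
  · have wlog : ∀ s t, s ≤ t → a ≤ s → t ≤ b + (d - c) →
        t - s ≤ 3 * Q * K * dist (r s) (r t) + 3 * Q * K ∧
        dist (r s) (r t) ≤ 3 * Q * K * (t - s) + 3 * Q * K := by
      intro s t hst h1 h2
      rcases le_total s b with hs | hs
      · rcases le_total t b with ht | ht
        · rw [r1 s hs, r1 t ht]
          have := hp s ⟨h1, hs⟩ t ⟨by linarith, ht⟩
          rw [abs_of_nonneg (by linarith)] at this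
          have h3 : Q * dist (p s) (p t) ≤ 3 * Q * K * dist (p s) (p t) := by gcongr
          have h4 : Q * (t - s) ≤ 3 * Q * K * (t - s) := by
            apply mul_le_mul_of_nonneg_right hQQ; linarith
          exact ⟨by linarith, by linarith⟩
        · exact key s t h1 hs ht h2
      · rw [r2 s hs, r2 t (hs.trans hst)]
        have := hq (s - b + c) ⟨by linarith, by linarith⟩ (t - b + c)
          ⟨by linarith, by linarith⟩
        rw [show t - b + c - (s - b + c) = t - s by ring, abs_of_nonneg (by linarith)] at this
        have h3 : Q * dist (q (s - b + c)) (q (t - b + c)) ≤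
          3 * Q * K * dist (q (s - b + c)) (q (t - b + c)) := by gcongr
        have h4 : Q * (t - s) ≤ 3 * Q * K * (t - s) := by
          apply mul_le_mul_of_nonneg_right hQQ; linarith
        exact ⟨by linarith, by linarith⟩
    intro s hs t ht
    rcases le_total s t with h | h
    · rw [abs_of_nonneg (by linarith)]
      exact wlog s t h hs.1 ht.2
    · rw [abs_of_nonpos (by linarith), dist_comm, neg_sub]
      exact wlog t s h ht.1 hs.2

theorem IsGeodesicSegment.seg {γ : ℝ → X} {ℓ : ℝ} {x y : X} (h : IsGeodesicSegment γ ℓ x y) :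
    Seg x y (γ '' Set.Icc 0 ℓ) := ⟨γ, ℓ, h, rfl⟩

theorem Seg.qpath {x y : X} {S : Set X} (h : Seg x y S) : QPath 1 x y S := by
  obtain ⟨γ, ℓ, ⟨hℓ, rfl, rfl, h⟩, rfl⟩ := h
  refine ⟨0, ℓ, γ, hℓ, rfl, rfl, rfl, fun s hs t ht => ?_⟩
  rw [h s hs t ht]; constructor <;> linarith

theorem Seg.dist_add {x y : X} {S : Set X} (h : Seg x y S) :
    ∀ u ∈ S, dist x u + dist u y = dist x y := by
  obtain ⟨γ, ℓ, ⟨hℓ, rfl, rfl, h⟩, rfl⟩ := h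
  rintro u ⟨t, ht, rfl⟩
  rw [h 0 ⟨le_rfl, hℓ⟩ t ht, h t ht ℓ ⟨hℓ, le_rfl⟩, h 0 ⟨le_rfl, hℓ⟩ ℓ ⟨hℓ, le_rfl⟩,
    abs_of_nonneg (by linarith [ht.1]), abs_of_nonneg (by linarith [ht.2]),
    abs_of_nonneg (by linarith)]
  ring

theorem IsGeodesicSpace.exists_seg (hX : IsGeodesicSpace X) (x y : X) : ∃ S, Seg x y S := by
  obtain ⟨γ, ℓ, h⟩ := hX x y
  exact ⟨_, h.seg⟩

/-- A unit speed path, restricted to `[s, t]`, is a geodesic. -/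
theorem seg_of_isometric {η : ℝ → X} {s t : ℝ} (hst : s ≤ t)
    (h : ∀ u ∈ Set.Icc s t, ∀ v ∈ Set.Icc s t, dist (η u) (η v) = |v - u|) :
    Seg (η s) (η t) (η '' Set.Icc s t) := by
  refine ⟨fun u => η (u + s), t - s, ⟨by linarith, by simp, by simp, fun u hu v hv => ?_⟩, ?_⟩
  · rw [h _ ⟨by linarith [hu.1], by linarith [hu.2]⟩ _ ⟨by linarith [hv.1], by linarith [hv.2]⟩]
    congr 1; ring
  · ext z
    constructor
    · rintro ⟨u, hu, rfl⟩
      exact ⟨u - s, ⟨by linarith [hu.1], by linarith [hu.2]⟩, by simp⟩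
    · rintro ⟨u, hu, rfl⟩
      exact ⟨u + s, ⟨by linarith [hu.1], by linarith [hu.2]⟩, rfl⟩

theorem Seg.symm {x y : X} {S : Set X} (h : Seg x y S) : Seg y x S := by
  obtain ⟨γ, ℓ, ⟨hℓ, rfl, rfl, h⟩, rfl⟩ := h
  refine ⟨fun t => γ (ℓ - t), ℓ, ⟨hℓ, by simp, by simp, fun s hs t ht => ?_⟩, ?_⟩
  · rw [h _ ⟨by linarith [hs.2], by linarith [hs.1]⟩ _ ⟨by linarith [ht.2], by linarith [ht.1]⟩,
      ← abs_neg]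
    congr 1; ring
  · ext z
    constructor
    · rintro ⟨t, ht, rfl⟩
      exact ⟨ℓ - t, ⟨by linarith [ht.2], by linarith [ht.1]⟩, by simp⟩
    · rintro ⟨t, ht, rfl⟩
      exact ⟨ℓ - t, ⟨by linarith [ht.2], by linarith [ht.1]⟩, rfl⟩

/-- A coarse closest-point projection. -/
theorem exists_coarse_proj {S : Set X} (hS : S.Nonempty) (z : X) :
    ∃ p ∈ S, ∀ s ∈ S, dist z p ≤ dist z s + 1 := by
  obtain ⟨p, hp, h⟩ := (Metric.infDist_lt_iff hS (x := z) (r := Metric.infDist z S + 1)).1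
    (by linarith)
  exact ⟨p, hp, fun s hs => h.le.trans (by linarith [Metric.infDist_le_dist_of_mem (x := z) hs])⟩

/-- A geodesic to a coarse closest-point projection diverges linearly from the target. -/
theorem sep_of_coarse_proj {S B : Set X} {z p : X} (h : ∀ s ∈ S, dist z p ≤ dist z s + 1)
    (hB : Seg z p B) : ∀ u ∈ B, ∀ v ∈ S, dist u p + dist p v ≤ 3 * dist u v + 3 := by
  intro u hu v hv
  have h1 := hB.dist_add u hu
  have h2 := h v hv
  have h3 := dist_triangle z u v
  have h4 := dist_triangle p u v
  rw [dist_comm p u] at h4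
  linarith

/-- Moving the initial point of a quasi-geodesic. -/
theorem QPath.extend_left (hX : IsGeodesicSpace X) {Q k : ℝ} (hQ : 1 ≤ Q) (hk : 0 ≤ k)
    {x x' y : X} {S : Set X} (h : QPath Q x y S) (hx : dist x' x ≤ k) :
    ∃ S', S ⊆ S' ∧ QPath (3 * Q * (2 * k + 1)) x' y S' ∧ Near k S' S := by
  obtain ⟨B, hB⟩ := hX.exists_seg x' x
  have hBk : ∀ u ∈ B, dist u x ≤ k := fun u hu => by
    have := hB.dist_add u hu
    have : 0 ≤ dist x' u := dist_nonneg
    linarith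
  refine ⟨B ∪ S, Set.subset_union_right, (hB.qpath.mono hQ).concat hQ (by linarith) h ?_, ?_⟩
  · intro u hu v hv
    have h1 := hBk u hu
    have h2 := dist_triangle x u v
    rw [dist_comm x u] at h2
    have h3 : 0 ≤ k * dist u v := by positivity
    nlinarith
  · rintro u (hu | hu)
    · exact ⟨x, h.left_mem, hBk u hu⟩
    · exact ⟨u, hu, by simpa⟩

theorem QPath.extend_right (hX : IsGeodesicSpace X) {Q k : ℝ} (hQ : 1 ≤ Q) (hk : 0 ≤ k)
    {x y y' : X} {S : Set X} (h : QPath Q x y S) (hy : dist y' y ≤ k) :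
    ∃ S', S ⊆ S' ∧ QPath (3 * Q * (2 * k + 1)) x y' S' ∧ Near k S' S := by
  obtain ⟨S', h1, h2, h3⟩ := h.symm.extend_left hX hQ hk hy
  exact ⟨S', h1, h2.symm, h3⟩

/-- Moving both endpoints of a quasi-geodesic. -/
theorem QPath.extend (hX : IsGeodesicSpace X) (Q : ℝ) {k : ℝ} (hQ : 1 ≤ Q) (hk : 0 ≤ k) :
    ∃ Q', 1 ≤ Q' ∧ Q ≤ Q' ∧ ∀ (x x' y y' : X) (S : Set X), QPath Q x y S → dist x' x ≤ k →
      dist y' y ≤ k → ∃ S', S ⊆ S' ∧ QPath Q' x' y' S' ∧ Near (2 * k) S' S := by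
  have h1 : Q ≤ 3 * Q * (2 * k + 1) := by nlinarith
  have h2 : 3 * Q * (2 * k + 1) ≤ 3 * (3 * Q * (2 * k + 1)) * (2 * k + 1) := by nlinarith
  refine ⟨3 * (3 * Q * (2 * k + 1)) * (2 * k + 1), by linarith, by linarith, ?_⟩
  intro x x' y y' S hS hx hy
  obtain ⟨S₁, hs₁, hq₁, hn₁⟩ := hS.extend_left hX hQ hk hx
  obtain ⟨S₂, hs₂, hq₂, hn₂⟩ := hq₁.extend_right hX (by linarith) hk hy
  refine ⟨S₂, hs₁.trans hs₂, hq₂, fun u hu => ?_⟩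
  obtain ⟨v, hv, huv⟩ := hn₂ u hu
  obtain ⟨w, hw, hvw⟩ := hn₁ v hv
  exact ⟨w, hw, by linarith [dist_triangle u v w]⟩

/-- A subset of a real interval has a coarsely last element. -/
theorem exists_coarse_last {a b : ℝ} (P : ℝ → Prop) {t₀ : ℝ} (h0 : t₀ ∈ Set.Icc a b)
    (hP : P t₀) : ∃ t ∈ Set.Icc t₀ b, P t ∧ ∀ s ∈ Set.Icc (t + 1) b, ¬ P s := by
  set A := {t | t ∈ Set.Icc t₀ b ∧ P t} with hA
  have hne : A.Nonempty := ⟨t₀, ⟨le_rfl, h0.2⟩, hP⟩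
  have hbd : BddAbove A := ⟨b, fun t ht => ht.1.2⟩
  obtain ⟨t, ht, hlt⟩ := exists_lt_of_lt_csSup hne (show sSup A - 1 < sSup A by linarith)
  refine ⟨t, ht.1, ht.2, fun s hs hPs => ?_⟩
  have := le_csSup hbd (show s ∈ A from ⟨⟨by linarith [ht.1.1, hs.1], hs.2⟩, hPs⟩)
  linarith [hs.1]

/-- Coarse connectedness: if a quasi-geodesic stays near another one with the same endpoints, then
it comes close to all its points. -/
theorem near_of_near {Q D : ℝ} (hQ : 1 ≤ Q) (hD : 0 ≤ D) {x y : X} {A S : Set X}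
    (hA : QPath Q x y A) (hS : QPath Q x y S) (h : Near D S A) :
    Near (D + Q * (Q * (2 * D + 2 * Q) + Q) + Q) A S := by
  obtain ⟨a, b, p, hab, rfl, rfl, rfl, hp⟩ := hA
  obtain ⟨c, d, q, hcd, hqc, hqd, rfl, hq⟩ := hS
  rintro _ ⟨r, hr, rfl⟩
  set L := Q * (2 * D + 2 * Q) + Q with hL
  have hL0 : 0 ≤ L := by positivity
  -- it suffices to find a point of the second path near points before and after `r`
  have fin : ∀ t ∈ Set.Icc c d, ∀ u ∈ Set.Icc a b, u ≤ r → dist (q t) (p u) ≤ D →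
      r - u ≤ L → ∃ z ∈ q '' Set.Icc c d, dist (p r) z ≤ D + Q * L + Q := by
    intro t ht u hu hur h1 h2
    refine ⟨q t, ⟨t, ht, rfl⟩, ?_⟩
    have h3 := (hp u hu r hr).2
    rw [abs_of_nonneg (by linarith)] at h3
    have h4 : Q * (r - u) ≤ Q * L := by gcongr
    have h5 := dist_triangle (p r) (p u) (q t)
    rw [dist_comm (p r) (p u), dist_comm (p u) (q t)] at h5
    linarith
  obtain ⟨t, ht, ⟨u, hu, hu2⟩, hlast⟩ := exists_coarse_last (a := c) (b := d)
    (fun t => ∃ u ∈ Set.Icc a r, dist (q t) (p u) ≤ D) (t₀ := c) ⟨le_rfl, hcd⟩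
    ⟨a, ⟨le_rfl, hr.1⟩, by simpa [hqc] using hD⟩
  have hu' : u ∈ Set.Icc a b := ⟨hu.1, hu.2.trans hr.2⟩
  by_cases hd : ∃ u ∈ Set.Icc a r, dist (q d) (p u) ≤ D
  · obtain ⟨u, hu, hu2⟩ := hd
    have hu' : u ∈ Set.Icc a b := ⟨hu.1, hu.2.trans hr.2⟩
    refine fin d ⟨hcd, le_rfl⟩ u hu' hu.2 hu2 ?_
    have h1 := (hp u hu' b ⟨hab, le_rfl⟩).1
    rw [abs_of_nonneg (by linarith [hu'.2]), dist_comm, ← hqd] at h1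
    have h2 : Q * dist (q d) (p u) ≤ Q * D := by gcongr
    have h3 : Q * D ≤ Q * (2 * D + 2 * Q) := by gcongr; linarith
    linarith [hr.2]
  · set t' := min (t + 1) d with ht'
    have ht'm : t' ∈ Set.Icc c d := ⟨le_min (by linarith [ht.1]) hcd, min_le_right _ _⟩
    have hnot : ¬ ∃ u ∈ Set.Icc a r, dist (q t') (p u) ≤ D := by
      rcases le_total (t + 1) d with h1 | h1
      · rw [ht', min_eq_left h1]; exact hlast _ ⟨le_rfl, h1⟩
      · rw [ht', min_eq_right h1]; exact hd
    obtain ⟨_, ⟨v, hv, rfl⟩, hv2⟩ := h (q t') ⟨t', ht'm, rfl⟩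
    have hrv : r < v := by
      by_contra hcon
      exact hnot ⟨v, ⟨hv.1, not_lt.1 hcon⟩, hv2⟩
    refine fin t ht u hu' hu.2 hu2 ?_
    have h1 := (hp u hu' v hv).1
    have h2 := (hq t ht t' ht'm).2
    have h3 : |t' - t| ≤ 1 := by
      rw [abs_of_nonneg (sub_nonneg.2 (le_min (by linarith) ht.2))]
      linarith [min_le_left (t + 1) d]
    have h4 : Q * |t' - t| ≤ Q * 1 := by gcongr
    have h5 : dist (p u) (p v) ≤ 2 * D + 2 * Q := by
      have := dist_triangle4 (p u) (q t) (q t') (p v)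
      rw [dist_comm (p u) (q t)] at this
      linarith
    rw [abs_of_nonneg (by linarith [hu.2])] at h1
    have h6 : Q * dist (p u) (p v) ≤ Q * (2 * D + 2 * Q) := by gcongr
    linarith

end Coarse

section Rigid

variable {X : Type*} [MetricSpace X]

theorem Rigid.mono {N N' : ℝ → ℝ} {u v : X} (h : Rigid N u v) (hN : ∀ Q, N Q ≤ N' Q) :
    Rigid N' u v :=
  fun Q hQ S S' hS hS' => (h Q hQ S S' hS hS').mono (hN Q)

theorem Rigid.symm {N : ℝ → ℝ} {u v : X} (h : Rigid N u v) : Rigid N v u :=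
  fun Q hQ S S' hS hS' => h Q hQ S S' hS.symm hS'.symm

/-- Pairs of points at bounded distance are uniformly rigid. -/
theorem rigid_of_dist_le (k : ℝ) {u v : X} (h : dist u v ≤ k) :
    Rigid (fun Q => Q * (Q * k + Q) + Q) u v := by
  intro Q hQ S S' hS hS' x hx
  refine ⟨u, hS'.left_mem, ?_⟩
  obtain ⟨a, b, q, hab, rfl, rfl, rfl, hq⟩ := hS
  obtain ⟨t, ht, rfl⟩ := hx
  have h1 := (hq a ⟨le_rfl, hab⟩ b ⟨hab, le_rfl⟩).1
  have h2 := (hq a ⟨le_rfl, hab⟩ t ht).2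
  rw [abs_of_nonneg (by linarith)] at h1
  rw [abs_of_nonneg (by linarith [ht.1]), dist_comm] at h2
  have h3 : Q * dist (q a) (q b) ≤ Q * k := by gcongr
  have h4 : Q * (t - a) ≤ Q * (Q * k + Q) := by gcongr; linarith [ht.2]
  simp only
  linarith

theorem Rigid.perturb (hX : IsGeodesicSpace X) (N : ℝ → ℝ) {k : ℝ} (hk : 0 ≤ k) :
    ∃ N' : ℝ → ℝ, ∀ u v u' v' : X, Rigid N u v → dist u' u ≤ k → dist v' v ≤ k →
      Rigid N' u' v' := by
  have key : ∀ Q : ℝ, 1 ≤ Q → ∃ D, ∀ u v u' v' : X, Rigid N u v → dist u' u ≤ k →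
      dist v' v ≤ k → RigidAt Q D u' v' := by
    intro Q hQ
    obtain ⟨Q', hQ', -, hext⟩ := QPath.extend hX Q hQ hk
    refine ⟨N Q' + 2 * k, fun u v u' v' h hu hv S S' hS hS' x hx => ?_⟩
    rw [dist_comm] at hu hv
    obtain ⟨T, hT, hTq, -⟩ := hext _ _ _ _ S hS hu hv
    obtain ⟨T', -, hTq', hn⟩ := hext _ _ _ _ S' hS' hu hv
    obtain ⟨y, hy, hxy⟩ := h Q' hQ' T T' hTq hTq' x (hT hx)
    obtain ⟨z, hz, hyz⟩ := hn y hy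
    exact ⟨z, hz, by linarith [dist_triangle x y z]⟩
  choose! N' hN' using key
  exact ⟨N', fun u v u' v' h hu hv Q hQ => hN' Q hQ u v u' v' h hu hv⟩

/-- Rigidity of `(u, p)` and `(p, v)` gives rigidity of `(u, v)`, if quasi-geodesics from `p` to `u`
and `v` diverge linearly. -/
theorem Rigid.of_center (hX : IsGeodesicSpace X) (N : ℝ → ℝ) {K : ℝ} (hK : 1 ≤ K) (Q₁ : ℝ) :
    ∃ N' : ℝ → ℝ, ∀ (u p v : X) (A B : Set X), Rigid N u p → Rigid N p v →
      QPath Q₁ u p A → QPath Q₁ p v B →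
      (∀ a ∈ A, ∀ b ∈ B, dist a p + dist p b ≤ K * dist a b + K) → Rigid N' u v := by
  have key : ∀ Q : ℝ, 1 ≤ Q → ∃ D, ∀ (u p v : X) (A B : Set X), Rigid N u p → Rigid N p v →
      QPath Q₁ u p A → QPath Q₁ p v B →
      (∀ a ∈ A, ∀ b ∈ B, dist a p + dist p b ≤ K * dist a b + K) → RigidAt Q D u v := by
    intro Q hQ
    set Qm := max Q Q₁ with hQm
    have hQm1 : 1 ≤ Qm := hQ.trans (le_max_left _ _)
    set Q' := 3 * Qm * 3 with hQ'
    have hQQ' : Qm ≤ Q' := by linarith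
    set D' := N Q' + (2 * K * N Q' + K) with hD'
    refine ⟨N Q' + |D'|, fun u p v A B hup hpv hA hB hsep => ?_⟩
    have decomp : ∀ S, QPath Q u v S → ∃ S₁ S₂ E, S = S₁ ∪ S₂ ∧ ∃ m ∈ S,
        QPath Q' u p (S₁ ∪ E) ∧ QPath Q' p v (S₂ ∪ E) ∧ ∀ e ∈ E, dist e m ≤ D' := by
      intro S hS
      obtain ⟨m, hm, hproj⟩ := exists_coarse_proj ⟨u, hS.left_mem⟩ p
      obtain ⟨S₁, S₂, rfl, h₁, h₂⟩ := hS.split hm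
      obtain ⟨E, hE⟩ := hX.exists_seg p m
      have sep := sep_of_coarse_proj hproj hE
      have p1 : QPath Q' u p (S₁ ∪ E) := by
        refine (h₁.mono (le_max_left _ _)).concat hQm1 (by norm_num) (hE.qpath.symm.mono hQm1) ?_
        intro a ha b hb
        have := sep b hb a (Or.inl ha)
        rw [dist_comm a m, dist_comm m b, dist_comm a b]; linarith
      have p2 : QPath Q' v p (S₂ ∪ E) := by
        refine (h₂.symm.mono (le_max_left _ _)).concat hQm1 (by norm_num)
          (hE.qpath.symm.mono hQm1) ?_
        intro a ha b hb
        have := sep b hb a (Or.inr ha)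
        rw [dist_comm a m, dist_comm m b, dist_comm a b]; linarith
      refine ⟨S₁, S₂, E, rfl, m, hm, p1, p2.symm, fun e he => ?_⟩
      obtain ⟨a, ha, hma⟩ := hup Q' (by linarith) _ _ p1
        (hA.mono ((le_max_right _ _).trans hQQ')) m (Or.inr hE.qpath.right_mem)
      obtain ⟨b, hb, hmb⟩ := hpv Q' (by linarith) _ _ p2.symm
        (hB.mono ((le_max_right _ _).trans hQQ')) m (Or.inr hE.qpath.right_mem)
      have h3 := hsep a ha b hb
      have h4 := dist_triangle a m b
      have h5 : K * dist a b ≤ K * (2 * N Q') := by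
        gcongr; rw [dist_comm a m] at h4; linarith
      have h6 := dist_triangle m a p
      have h7 := hE.dist_add e he
      have h8 : 0 ≤ dist p b := dist_nonneg
      have h9 : 0 ≤ dist p e := dist_nonneg
      rw [dist_comm m p] at h6
      linarith
    intro S S' hS hS' x hx
    obtain ⟨S₁, S₂, E, rfl, m, hm, h1, h2, hE⟩ := decomp S hS
    obtain ⟨S₁', S₂', E', rfl, m', hm', h1', h2', hE'⟩ := decomp S' hS'
    have hle := le_abs_self D'
    have hnn := abs_nonneg D'
    rcases hx with hx | hx
    · obtain ⟨y, hy | hy, hxy⟩ := hup Q' (by linarith) _ _ h1 h1' x (Or.inl hx)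
      · exact ⟨y, Or.inl hy, by linarith⟩
      · exact ⟨m', hm', by linarith [dist_triangle x y m', hE' y hy]⟩
    · obtain ⟨y, hy | hy, hxy⟩ := hpv Q' (by linarith) _ _ h2 h2' x (Or.inl hx)
      · exact ⟨y, Or.inr hy, by linarith⟩
      · exact ⟨m', hm', by linarith [dist_triangle x y m', hE' y hy]⟩
  choose! N' hN' using key
  exact ⟨N', fun u p v A B h1 h2 h3 h4 h5 Q hQ => hN' Q hQ u p v A B h1 h2 h3 h4 h5⟩

/-- If two Morse geodesics of starting points `x`, `y` come close to each other far away, then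
`x` and `y` are joined by a quasi-geodesic all of whose pairs of points are Morse. -/
theorem exists_rigid_path (hX : IsGeodesicSpace X) (N : ℝ → ℝ) :
    ∃ N' : ℝ → ℝ, ∀ (x a y b : X) (α β : Set X), Seg x a α → Seg y b β →
      (∀ u ∈ α, ∀ v ∈ α, Rigid N u v) → (∀ u ∈ β, ∀ v ∈ β, Rigid N u v) →
      6 * (dist x y + dist a b + 1) ≤ dist x a →
      ∃ P, QPath 9 x y P ∧ ∀ u ∈ P, ∀ v ∈ P, Rigid N' u v := by
  obtain ⟨N₁, hN₁⟩ := Rigid.perturb hX N (abs_nonneg (N 81))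
  set N₂ : ℝ → ℝ := fun Q => max (N Q) (N₁ Q) with hN₂
  obtain ⟨N₃, hN₃⟩ := Rigid.of_center hX N₂ (K := 3) (by norm_num) 1
  refine ⟨fun Q => max (N₂ Q) (N₃ Q), fun x a y b α β hα hβ hαN hβN hbig => ?_⟩
  obtain ⟨p, hp, hproj⟩ := exists_coarse_proj ⟨x, hα.qpath.left_mem⟩ y
  obtain ⟨p₂, hp₂, hproj₂⟩ := exists_coarse_proj ⟨x, hα.qpath.left_mem⟩ b
  obtain ⟨B, hB⟩ := hX.exists_seg y p
  obtain ⟨E, hE⟩ := hX.exists_seg b p₂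
  obtain ⟨α₁, hα₁, hα₁q⟩ := hα.qpath.exists_subpath hp hp₂
  have sepB := sep_of_coarse_proj hproj hB
  have sepE := sep_of_coarse_proj hproj₂ hE
  have q1 : QPath 9 y p₂ (B ∪ α₁) := by
    have := hB.qpath.concat le_rfl (by norm_num : (1 : ℝ) ≤ 3) hα₁q
      fun u hu v hv => sepB u hu v (hα₁ hv)
    norm_num at this
    exact this
  have q2 : QPath 81 y b (B ∪ α₁ ∪ E) := by
    have := q1.concat (by norm_num) (by norm_num : (1 : ℝ) ≤ 3) (hE.qpath.symm.mono (by norm_num)) ?_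
    · norm_num at this
      exact this
    · rintro u (hu | hu) v hv
      · have e1 := hproj x hα.qpath.left_mem
        have e2 := hproj₂ a hα.qpath.right_mem
        have e3 := hB.dist_add u hu
        have e4 := hE.dist_add v hv
        have e5 := dist_triangle x y p
        have e6 := dist_triangle p₂ b a
        have e7 := dist_triangle4 x p p₂ a
        have e8 := dist_triangle4 p u v p₂
        have e9 := dist_triangle u p p₂
        have n1 : 0 ≤ dist y u := dist_nonneg
        have n2 : 0 ≤ dist b v := dist_nonneg
        have n3 : 0 ≤ dist x y := dist_nonneg
        have n4 : 0 ≤ dist a b := dist_nonneg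
        rw [dist_comm y x] at e1
        rw [dist_comm b a] at e2 e6
        rw [dist_comm p₂ b] at e6
        rw [dist_comm p u] at e8
        rw [dist_comm p₂ v]
        linarith
      · have := sepE v hv u (hα₁ hu)
        rw [dist_comm u p₂, dist_comm p₂ v, dist_comm u v]; linarith
  have hBβ : ∀ u ∈ B, ∃ w ∈ β, dist u w ≤ |N 81| := fun u hu => by
    obtain ⟨w, hw, h⟩ := hβN y hβ.qpath.left_mem b hβ.qpath.right_mem 81 (by norm_num) _ _ q2
      (hβ.qpath.mono (by norm_num)) u (Or.inl (Or.inl hu))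
    exact ⟨w, hw, h.trans (le_abs_self _)⟩
  have hBB : ∀ u ∈ B, ∀ v ∈ B, Rigid N₂ u v := by
    intro u hu v hv
    obtain ⟨u', hu', huu⟩ := hBβ u hu
    obtain ⟨v', hv', hvv⟩ := hBβ v hv
    exact (hN₁ u' v' u v (hβN u' hu' v' hv') huu hvv).mono fun Q => le_max_right _ _
  obtain ⟨α₀, hα₀, hα₀q⟩ := hα.qpath.exists_subpath hα.qpath.left_mem hp
  have hmix : ∀ u ∈ α₀, ∀ v ∈ B, Rigid (fun Q => max (N₂ Q) (N₃ Q)) u v := by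
    intro u hu v hv
    obtain ⟨A', hA', hA'q⟩ := hα.qpath.exists_subpath (hα₀ hu) hp
    obtain ⟨B', hB', hB'q⟩ := hB.qpath.exists_subpath hB.qpath.right_mem hv
    refine (hN₃ u p v A' B' ((hαN u (hα₀ hu) p hp).mono fun Q => le_max_left _ _)
      (hBB p hB.qpath.right_mem v hv) hA'q hB'q ?_).mono fun Q => le_max_right _ _
    intro a ha b hb
    have := sepB b (hB' hb) a (hA' ha)
    rw [dist_comm a p, dist_comm p b, dist_comm a b]; linarith
  refine ⟨α₀ ∪ B, ?_, ?_⟩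
  · have := hα₀q.concat le_rfl (by norm_num : (1 : ℝ) ≤ 3) hB.qpath.symm ?_
    · norm_num at this
      exact this
    · intro a ha b hb
      have := sepB b hb a (hα₀ ha)
      rw [dist_comm a p, dist_comm p b, dist_comm a b]; linarith
  · rintro u (hu | hu) v (hv | hv)
    · exact (hαN u (hα₀ hu) v (hα₀ hv)).mono fun Q =>
        (le_max_left _ _).trans (le_max_left _ _)
    · exact hmix u hu v hv
    · exact (hmix v hv u hu).symm
    · exact (hBB u hu v hv).mono fun Q => le_max_left _ _

theorem gromovHyperbolic_of_rigid (hX : IsGeodesicSpace X) (N : ℝ → ℝ)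
    (h : ∀ x y : X, Rigid N x y) : GromovHyperbolic X := by
  refine ⟨max (N 9) 0, le_max_right _ _, ?_⟩
  intro x y z γ₁ γ₂ γ₃ ℓ₁ ℓ₂ ℓ₃ h₁ h₂ h₃ s hs
  have s₁ := h₁.seg
  obtain ⟨p, hp, hproj⟩ := exists_coarse_proj ⟨x, s₁.qpath.left_mem⟩ z
  obtain ⟨B, hB⟩ := hX.exists_seg z p
  have sep := sep_of_coarse_proj hproj hB
  obtain ⟨A₁, A₂, hA, hA₁, hA₂⟩ := s₁.qpath.split hp
  have hmem : γ₁ s ∈ A₁ ∪ A₂ := hA ▸ ⟨s, hs, rfl⟩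
  rcases hmem with hm | hm
  · have q := hB.qpath.concat le_rfl (by norm_num : (1 : ℝ) ≤ 3) hA₁.symm
      fun u hu v hv => sep u hu v (hA ▸ Or.inl hv)
    norm_num at q
    obtain ⟨w, hw, hd⟩ := h z x 9 (by norm_num) _ _ q (h₃.seg.qpath.mono (by norm_num)) _ (Or.inr hm)
    exact ⟨w, Or.inr hw, hd.trans (le_max_left _ _)⟩
  · have q := hB.qpath.concat le_rfl (by norm_num : (1 : ℝ) ≤ 3) hA₂
      fun u hu v hv => sep u hu v (hA ▸ Or.inr hv)
    norm_num at q
    obtain ⟨w, hw, hd⟩ := h z y 9 (by norm_num) _ _ q (h₂.seg.qpath.symm.mono (by norm_num)) _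
      (Or.inr hm)
    exact ⟨w, Or.inl hw, hd.trans (le_max_left _ _)⟩

theorem QPath.map {Y : Type*} [MetricSpace Y] {f : X → Y} {A Q : ℝ} (hA : 1 ≤ A) (hQ : 1 ≤ Q)
    (hf₁ : ∀ x x', dist (f x) (f x') ≤ A * dist x x' + A)
    (hf₂ : ∀ x x', dist x x' ≤ A * dist (f x) (f x') + A) {x y : X} {S : Set X}
    (h : QPath Q x y S) : QPath (2 * Q * A) (f x) (f y) (f '' S) := by
  obtain ⟨a, b, q, hab, rfl, rfl, rfl, hq⟩ := h
  refine ⟨a, b, f ∘ q, hab, rfl, rfl, (Set.image_comp f q _).symm, fun s hs t ht => ?_⟩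
  obtain ⟨h1, h2⟩ := hq s hs t ht
  have h3 := hf₁ (q s) (q t)
  have h4 := hf₂ (q s) (q t)
  have h5 : Q * dist (q s) (q t) ≤ Q * (A * dist (f (q s)) (f (q t)) + A) := by gcongr
  have h6 : A * dist (q s) (q t) ≤ A * (Q * |t - s| + Q) := by gcongr
  have h7 : 0 ≤ Q * A * dist (f (q s)) (f (q t)) := by positivity
  have h8 : 0 ≤ Q * A * |t - s| := by positivity
  simp only [Function.comp]
  constructor <;> nlinarith

/-- Rigidity pulls back under quasi-isometric embeddings. -/
theorem Rigid.of_map {Y : Type*} [MetricSpace Y] {f : X → Y} {A : ℝ} (hA : 1 ≤ A)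
    (hf₁ : ∀ x x', dist (f x) (f x') ≤ A * dist x x' + A)
    (hf₂ : ∀ x x', dist x x' ≤ A * dist (f x) (f x') + A) {N : ℝ → ℝ} {u v : X}
    (h : Rigid N (f u) (f v)) : Rigid (fun Q => A * N (2 * Q * A) + A) u v := by
  intro Q hQ S S' hS hS' x hx
  obtain ⟨_, ⟨y, hy, rfl⟩, hd⟩ := h (2 * Q * A) (by nlinarith) _ _ (hS.map hA hQ hf₁ hf₂)
    (hS'.map hA hQ hf₁ hf₂) (f x) ⟨x, hx, rfl⟩
  refine ⟨y, hy, (hf₂ x y).trans ?_⟩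
  simp only
  gcongr

theorem QPath.smul {G : Type*} [Group G] [MulAction G X]
    (hG : ∀ g : G, Isometry fun x : X => g • x) {Q : ℝ} {x y : X} {S : Set X} (g : G)
    (h : QPath Q x y S) : QPath Q (g • x) (g • y) (g • S) := by
  obtain ⟨a, b, q, hab, rfl, rfl, rfl, hq⟩ := h
  refine ⟨a, b, fun t => g • q t, hab, rfl, rfl, ?_, fun s hs t ht => ?_⟩
  · rw [← Set.image_smul, Set.image_image]
  · rw [(hG g).dist_eq]; exact hq s hs t ht

theorem Rigid.smul {G : Type*} [Group G] [MulAction G X]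
    (hG : ∀ g : G, Isometry fun x : X => g • x) {N : ℝ → ℝ} {u v : X} (g : G)
    (h : Rigid N u v) : Rigid N (g • u) (g • v) := by
  intro Q hQ S S' hS hS' x hx
  have h1 := hS.smul hG g⁻¹
  have h2 := hS'.smul hG g⁻¹
  rw [inv_smul_smul, inv_smul_smul] at h1 h2
  obtain ⟨y, hy, hd⟩ := h Q hQ _ _ h1 h2 (g⁻¹ • x) (Set.smul_mem_smul_set hx)
  refine ⟨g • y, by rwa [← Set.mem_inv_smul_set_iff], ?_⟩
  rw [← (hG g).dist_eq] at hd
  simpa using hd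

end Rigid

section Contracting

variable {Y : Type*} [MetricSpace Y]

/-- The unit speed path `lam`, defined on `I`, has bounded geodesic image with respect to the
coarse projection `π`: geodesics between points with distant projections come `c`-close to all
points of `lam` between the projections. -/
structure BoundedImage (c : ℝ) (I : Set ℝ) (lam : ℝ → Y) (π : Y → ℝ) : Prop where
  dist_eq : ∀ s ∈ I, ∀ t ∈ I, dist (lam s) (lam t) = |t - s|
  proj_mem : ∀ x, π x ∈ I
  proj_self : ∀ t ∈ I, |π (lam t) - t| ≤ c
  pass : ∀ a b S, Seg a b S → c < |π a - π b| → ∀ t ∈ Set.uIcc (π a) (π b),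
    ∃ m ∈ S, dist m (lam t) ≤ c

theorem BoundedImage.nonneg {c : ℝ} {I : Set ℝ} {lam : ℝ → Y} {π : Y → ℝ} (h : BoundedImage c I lam π) :
    0 ≤ c :=
  (abs_nonneg _).trans (h.proj_self _ (h.proj_mem (lam 0)))

theorem BoundedImage.restrict {c : ℝ} {I : Set ℝ} {lam : ℝ → Y} {π : Y → ℝ} (h : BoundedImage c I lam π)
    {u v : ℝ} (huv : u ≤ v) (hI : Set.Icc u v ⊆ I) :
    BoundedImage c (Set.Icc u v) lam (fun x => max u (min v (π x))) where
  dist_eq s hs t ht := h.dist_eq s (hI hs) t (hI ht)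
  proj_mem x := ⟨le_max_left _ _, max_le huv (min_le_left _ _)⟩
  proj_self t ht := by
    have := abs_le.1 (h.proj_self t (hI ht))
    obtain ⟨h1, h2⟩ := ht
    rw [abs_le]
    constructor <;> rcases max_cases u (min v (π (lam t))) with h3 | h3 <;>
      rcases min_cases v (π (lam t)) with h4 | h4 <;> linarith
  pass a b S hS hc t ht := by
    have hc0 := h.nonneg
    have key : ∀ x y : ℝ, c < |max u (min v x) - max u (min v y)| → t ∈ Set.uIcc
        (max u (min v x)) (max u (min v y)) → c < |x - y| ∧ t ∈ Set.uIcc x y := by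
      intro x y h1 h2
      have h3 : |max u (min v x) - max u (min v y)| ≤ |x - y| :=
        (abs_max_sub_max_le_max u (min v x) u (min v y)).trans
          (max_le (by simp) ((abs_min_sub_min_le_max v x v y).trans (max_le (by simp) le_rfl)))
      refine ⟨h1.trans_le h3, ?_⟩
      rw [Set.mem_uIcc] at h2 ⊢
      rcases h2 with h2 | h2
      · left
        have : max u (min v x) < max u (min v y) := by
          rcases (h2.1.trans h2.2).eq_or_lt with h | h
          · rw [h] at h1; simp at h1; linarith
          · exact h
        rcases max_cases u (min v x) with h5 | h5 <;> rcases max_cases u (min v y) with h6 | h6 <;>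
          rcases min_cases v x with h7 | h7 <;> rcases min_cases v y with h8 | h8 <;>
          constructor <;> linarith
      · right
        have : max u (min v y) < max u (min v x) := by
          rcases (h2.1.trans h2.2).eq_or_lt with h | h
          · rw [h] at h1; simp at h1; linarith
          · exact h
        rcases max_cases u (min v x) with h5 | h5 <;> rcases max_cases u (min v y) with h6 | h6 <;>
          rcases min_cases v x with h7 | h7 <;> rcases min_cases v y with h8 | h8 <;>
          constructor <;> linarith
    obtain ⟨h1, h2⟩ := key _ _ hc ht
    exact h.pass a b S hS h1 t h2

theorem BoundedImage.reverse {c ℓ : ℝ} {lam : ℝ → Y} {π : Y → ℝ}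
    (h : BoundedImage c (Set.Icc 0 ℓ) lam π) :
    BoundedImage c (Set.Icc 0 ℓ) (fun t => lam (ℓ - t)) (fun x => ℓ - π x) where
  dist_eq s hs t ht := by
    rw [h.dist_eq _ ⟨by linarith [hs.2], by linarith [hs.1]⟩ _
      ⟨by linarith [ht.2], by linarith [ht.1]⟩, ← abs_neg]
    congr 1; ring
  proj_mem x := ⟨by linarith [(h.proj_mem x).2], by linarith [(h.proj_mem x).1]⟩
  proj_self t ht := by
    have := h.proj_self (ℓ - t) ⟨by linarith [ht.2], by linarith [ht.1]⟩
    rwa [← abs_neg, show -(ℓ - π (lam (ℓ - t)) - t) = π (lam (ℓ - t)) - (ℓ - t) by ring]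
  pass a b S hS hc t ht := by
    refine h.pass a b S hS
      (by rwa [← abs_neg, show -(ℓ - π a - (ℓ - π b)) = π a - π b by ring] at hc) _ ?_
    rw [Set.mem_uIcc] at ht ⊢
    rcases ht with ht | ht
    · right; constructor <;> linarith
    · left; constructor <;> linarith

theorem Seg.smul {G : Type*} [Group G] [MulAction G Y]
    (hG : ∀ g : G, Isometry fun x : Y => g • x) (g : G) {x y : Y} {S : Set Y} (h : Seg x y S) :
    Seg (g • x) (g • y) (g • S) := by
  obtain ⟨γ, ℓ, ⟨hℓ, rfl, rfl, h⟩, rfl⟩ := h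
  refine ⟨fun t => g • γ t, ℓ, ⟨hℓ, rfl, rfl, fun s hs t ht => ?_⟩, ?_⟩
  · rw [(hG g).dist_eq]; exact h s hs t ht
  · rw [← Set.image_smul, Set.image_image]

theorem BoundedImage.smul {G : Type*} [Group G] [MulAction G Y]
    (hG : ∀ g : G, Isometry fun x : Y => g • x) (g : G) {c : ℝ} {I : Set ℝ} {lam : ℝ → Y}
    {π : Y → ℝ} (h : BoundedImage c I lam π) :
    BoundedImage c I (fun t => g • lam t) (fun x => π (g⁻¹ • x)) where
  dist_eq s hs t ht := by rw [(hG g).dist_eq]; exact h.dist_eq s hs t ht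
  proj_mem x := h.proj_mem _
  proj_self t ht := by simpa using h.proj_self t ht
  pass a b S hS hc t ht := by
    obtain ⟨m, hm, hd⟩ := h.pass _ _ _ (hS.smul hG g⁻¹) hc t ht
    refine ⟨g • m, by rwa [← Set.mem_inv_smul_set_iff], ?_⟩
    rw [(hG g).dist_eq]; exact hd

theorem BoundedImage.lipschitz (hY : IsGeodesicSpace Y) {c : ℝ} {I : Set ℝ} {lam : ℝ → Y} {π : Y → ℝ}
    (h : BoundedImage c I lam π) (x y : Y) : |π x - π y| ≤ dist x y + 2 * c := by
  rcases le_or_gt |π x - π y| c with hc | hc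
  · have : 0 ≤ dist x y := dist_nonneg
    linarith [h.nonneg]
  · obtain ⟨S, hS⟩ := hY.exists_seg x y
    obtain ⟨m, hm, h1⟩ := h.pass x y S hS hc _ Set.left_mem_uIcc
    obtain ⟨m', hm', h2⟩ := h.pass x y S hS hc _ Set.right_mem_uIcc
    have h3 := h.dist_eq _ (h.proj_mem x) _ (h.proj_mem y)
    rw [abs_sub_comm, ← h3]
    obtain ⟨γ, ℓ, ⟨hℓ, rfl, rfl, hγ⟩, rfl⟩ := hS
    obtain ⟨s, hs, rfl⟩ := hm
    obtain ⟨t, ht, rfl⟩ := hm'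
    have h4 := dist_triangle4 (lam (π (γ 0))) (γ s) (γ t) (lam (π (γ ℓ)))
    rw [dist_comm _ (γ s), hγ s hs t ht] at h4
    rw [hγ 0 ⟨le_rfl, hℓ⟩ ℓ ⟨hℓ, le_rfl⟩, sub_zero, abs_of_nonneg hℓ]
    have : |t - s| ≤ ℓ := abs_le.2 ⟨by linarith [hs.2, ht.1], by linarith [ht.2, hs.1]⟩
    linarith

theorem BoundedImage.contract (hY : IsGeodesicSpace Y) {c : ℝ} {I : Set ℝ} {lam : ℝ → Y} {π : Y → ℝ}
    (h : BoundedImage c I lam π) {x y : Y} (hxy : dist x y + c < dist x (lam (π x))) :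
    |π x - π y| ≤ c := by
  by_contra hc
  obtain ⟨S, hS⟩ := hY.exists_seg x y
  obtain ⟨m, hm, h1⟩ := h.pass x y S hS (not_le.1 hc) _ Set.left_mem_uIcc
  have h2 := hS.dist_add m hm
  have h3 := dist_triangle x m (lam (π x))
  have : 0 ≤ dist m y := dist_nonneg
  linarith

/-- A function with increments at most `c` over steps of length `h`. -/
theorem abs_sub_le_of_steps {f : ℝ → ℝ} {s₁ s₂ c h : ℝ} (hc : 0 ≤ c) (hh : 0 < h)
    (hs : s₁ ≤ s₂)
    (hf : ∀ s ∈ Set.Icc s₁ s₂, ∀ t ∈ Set.Icc s₁ s₂, |t - s| ≤ h → |f s - f t| ≤ c) :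
    |f s₁ - f s₂| ≤ c * ((s₂ - s₁) / h + 1) := by
  have key : ∀ n : ℕ, ∀ s ∈ Set.Icc s₁ s₂, s - s₁ ≤ n * h → |f s₁ - f s| ≤ n * c := by
    intro n
    induction n with
    | zero =>
      intro s hs h0
      have : s = s₁ := le_antisymm (by simpa using h0) hs.1
      simp [this]
    | succ n ih =>
      intro s hs hn
      push_cast at hn ⊢
      have hm : max s₁ (s - h) ∈ Set.Icc s₁ s₂ :=
        ⟨le_max_left _ _, max_le (hs.1.trans hs.2) (by linarith [hs.2])⟩
      have h1 := ih _ hm (by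
        rcases max_cases s₁ (s - h) with h3 | h3
        · rw [h3.1, sub_self]; positivity
        · rw [h3.1]; linarith)
      have h2 := hf _ hm s hs (by
        rw [abs_of_nonneg (sub_nonneg.2 (max_le hs.1 (by linarith)))]
        linarith [le_max_right s₁ (s - h)])
      linarith [abs_sub_le (f s₁) (f (max s₁ (s - h))) (f s)]
  have h0 : 0 ≤ (s₂ - s₁) / h := div_nonneg (by linarith) hh.le
  have h1 := key ⌈(s₂ - s₁) / h⌉₊ s₂ ⟨hs, le_rfl⟩ (by
    have := mul_le_mul_of_nonneg_right (Nat.le_ceil ((s₂ - s₁) / h)) hh.le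
    rwa [div_mul_cancel₀ _ hh.ne'] at this)
  have h2 := (Nat.ceil_lt_add_one h0).le
  calc _ ≤ _ := h1
    _ ≤ ((s₂ - s₁) / h + 1) * c := by gcongr
    _ = _ := by ring

/-- Quasi-geodesics with endpoints on a path with bounded geodesic image stay close to it. -/
theorem BoundedImage.near (hY : IsGeodesicSpace Y) (c : ℝ) (Q : ℝ) (hQ : 1 ≤ Q) :
    ∃ D : ℝ, 0 ≤ D ∧ ∀ (I : Set ℝ) (lam : ℝ → Y) (π : Y → ℝ), BoundedImage c I lam π →
      ∀ u ∈ I, ∀ v ∈ I, ∀ S, QPath Q (lam u) (lam v) S → Near D S (lam '' I) := by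
  set h := 2 * |c| * Q + 1 with hh
  set K := Q * h + Q + |c| + 1 with hK
  set W := 2 * Q * (8 * Q + 2 * K + 5 * |c|) + 2 * Q with hW
  have hh0 : 0 < h := by positivity
  have hK0 : 0 ≤ K := by positivity
  have hW0 : 0 ≤ W := by positivity
  refine ⟨K + 3 * Q + Q * W, by positivity, ?_⟩
  intro I lam π hb u hu v hv S hS
  have hc0 := hb.nonneg
  rw [abs_of_nonneg hc0] at hh hK hW
  obtain ⟨a, b, q, hab, hqa, hqb, rfl, hq⟩ := hS
  rintro _ ⟨t, ht, rfl⟩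
  have hstep : ∀ s ∈ Set.Icc a b, ∀ r ∈ Set.Icc a b, ∀ k, |r - s| ≤ k →
      dist (q s) (q r) ≤ Q * k + Q := fun s hs r hr k hk => by
    have := (hq s hs r hr).2
    have : Q * |r - s| ≤ Q * k := by gcongr
    linarith
  have hend : ∀ w ∈ I, dist (lam w) (lam (π (lam w))) ≤ K := fun w hw => by
    rw [hb.dist_eq w hw _ (hb.proj_mem _)]
    have := hb.proj_self w hw
    have : 0 ≤ Q * h := by positivity
    linarith
  have hQW : 0 ≤ Q * W := by positivity
  obtain ⟨t₁, ht₁, hP₁, hl₁⟩ := exists_coarse_last (a := a) (b := t)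
    (fun s => dist (q s) (lam (π (q s))) ≤ K) ⟨le_rfl, ht.1⟩ (by rw [hqa]; exact hend u hu)
  obtain ⟨t₂', ht₂', hP₂, hl₂'⟩ := exists_coarse_last (a := -b) (b := -t)
    (fun s => dist (q (-s)) (lam (π (q (-s)))) ≤ K) (t₀ := -b) ⟨le_rfl, by linarith [ht.2]⟩
    (by rw [neg_neg, hqb]; exact hend v hv)
  set t₂ := -t₂' with ht₂d
  have ht₂ : t₂ ∈ Set.Icc t b := ⟨by linarith [ht₂'.2], by linarith [ht₂'.1]⟩
  have hl₂ : ∀ s ∈ Set.Icc t (t₂ - 1), ¬ dist (q s) (lam (π (q s))) ≤ K := fun s hs => by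
    have := hl₂' (-s) ⟨by linarith [hs.2], by linarith [hs.1]⟩
    simpa using this
  have m₁ : t₁ ∈ Set.Icc a b := ⟨ht₁.1, ht₁.2.trans ht.2⟩
  have m₂ : t₂ ∈ Set.Icc a b := ⟨ht.1.trans ht₂.1, ht₂.2⟩
  rcases lt_or_ge t (t₁ + 1) with hlt | hge₁
  · refine ⟨_, ⟨π (q t₁), hb.proj_mem _, rfl⟩, ?_⟩
    have h1 := hstep t ht t₁ m₁ 1 (by
      rw [abs_of_nonpos (by linarith [ht₁.2])]; linarith)
    linarith [dist_triangle (q t) (q t₁) (lam (π (q t₁)))]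
  rcases lt_or_ge (t₂ - 1) t with hlt | hge₂
  · refine ⟨_, ⟨π (q t₂), hb.proj_mem _, rfl⟩, ?_⟩
    have h1 := hstep t ht t₂ m₂ 1 (by
      rw [abs_of_nonneg (by linarith [ht₂.1])]; linarith)
    linarith [dist_triangle (q t) (q t₂) (lam (π (q t₂)))]
  have n₁ : t₁ + 1 ∈ Set.Icc a b := ⟨by linarith [ht₁.1], by linarith [ht.2]⟩
  have n₂ : t₂ - 1 ∈ Set.Icc a b := ⟨by linarith [ht.1], by linarith [ht₂.2]⟩
  have hfar : ∀ s ∈ Set.Icc (t₁ + 1) (t₂ - 1), K < dist (q s) (lam (π (q s))) := by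
    intro s hs
    rcases le_total s t with h1 | h1
    · exact not_le.1 (hl₁ s ⟨hs.1, h1⟩)
    · exact not_le.1 (hl₂ s ⟨h1, hs.2⟩)
  have hdrift := abs_sub_le_of_steps (f := fun s => π (q s)) hc0 hh0 (hge₁.trans hge₂) (by
    intro s hs r hr hsr
    apply hb.contract hY
    have h1 := hstep s ⟨n₁.1.trans hs.1, hs.2.trans n₂.2⟩ r ⟨n₁.1.trans hr.1, hr.2.trans n₂.2⟩ h hsr
    have h2 := hfar s hs
    linarith)
  set w := t₂ - 1 - (t₁ + 1) with hw
  have hw0 : 0 ≤ w := by linarith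
  have hcw : Q * (c * (w / h + 1)) ≤ w / 2 + Q * c := by
    have : Q * (c * (w / h)) ≤ w / 2 := by
      rw [show Q * (c * (w / h)) = (Q * c * w) / h by ring, div_le_iff₀ hh0, hh]
      nlinarith
    linarith
  have e1 := hstep _ n₁ _ m₁ 1 (by simp)
  have e2 := hstep _ n₂ _ m₂ 1 (by simp)
  have e3 := hb.lipschitz hY (q t₁) (q (t₁ + 1))
  have e4 := hb.lipschitz hY (q (t₂ - 1)) (q t₂)
  rw [dist_comm (q t₁)] at e3
  have e5 : dist (lam (π (q t₁))) (lam (π (q t₂))) ≤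
      4 * Q + 4 * c + c * (w / h + 1) := by
    rw [hb.dist_eq _ (hb.proj_mem _) _ (hb.proj_mem _), abs_sub_comm]
    have a1 := abs_sub_le (π (q t₁)) (π (q (t₁ + 1))) (π (q t₂))
    have a2 := abs_sub_le (π (q (t₁ + 1))) (π (q (t₂ - 1))) (π (q t₂))
    linarith
  have e6 : dist (q (t₁ + 1)) (q (t₂ - 1)) ≤ 8 * Q + 2 * K + 4 * c + c * (w / h + 1) := by
    have a1 := dist_triangle4 (q (t₁ + 1)) (q t₁) (lam (π (q t₁))) (q (t₂ - 1))
    have a2 := dist_triangle4 (lam (π (q t₁))) (lam (π (q t₂))) (q t₂) (q (t₂ - 1))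
    rw [dist_comm (lam (π (q t₂))), dist_comm (q t₂) (q (t₂ - 1))] at a2
    linarith
  have e7 := (hq _ n₁ _ n₂).1
  rw [abs_of_nonneg (by linarith), ← hw] at e7
  have e8 : Q * dist (q (t₁ + 1)) (q (t₂ - 1)) ≤
      Q * (8 * Q + 2 * K + 4 * c + c * (w / h + 1)) := by gcongr
  have e9 : w ≤ W := by nlinarith
  refine ⟨_, ⟨π (q t₁), hb.proj_mem _, rfl⟩, ?_⟩
  have f1 := hstep t ht _ n₁ W (by
    rw [abs_of_nonpos (by linarith)]; linarith)
  have := dist_triangle4 (q t) (q (t₁ + 1)) (q t₁) (lam (π (q t₁)))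
  linarith

/-- Pairs of points on a path with bounded geodesic image are uniformly Morse. -/
theorem BoundedImage.rigid (hY : IsGeodesicSpace Y) (c : ℝ) :
    ∃ N : ℝ → ℝ, ∀ (ℓ : ℝ) (lam : ℝ → Y) (π : Y → ℝ), BoundedImage c (Set.Icc 0 ℓ) lam π →
      ∀ u ∈ Set.Icc 0 ℓ, ∀ v ∈ Set.Icc 0 ℓ, Rigid N (lam u) (lam v) := by
  have key : ∀ Q : ℝ, 1 ≤ Q → ∃ D', ∀ (ℓ : ℝ) (lam : ℝ → Y) (π : Y → ℝ),
      BoundedImage c (Set.Icc 0 ℓ) lam π → ∀ u ∈ Set.Icc 0 ℓ, ∀ v ∈ Set.Icc 0 ℓ, u ≤ v →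
      RigidAt Q D' (lam u) (lam v) := by
    intro Q hQ
    obtain ⟨D, hD, hnear⟩ := BoundedImage.near hY c Q hQ
    refine ⟨D + (D + Q * (Q * (2 * D + 2 * Q) + Q) + Q), ?_⟩
    intro ℓ lam π hb u hu v hv huv S S' hS hS' x hx
    have hr := hb.restrict huv (fun t ht => ⟨hu.1.trans ht.1, ht.2.trans hv.2⟩)
    have hseg := (seg_of_isometric huv hr.dist_eq).qpath.mono hQ
    have n1 := hnear _ _ _ hr u ⟨le_rfl, huv⟩ v ⟨huv, le_rfl⟩ S hS
    have n2 := near_of_near hQ hD hseg hS' (hnear _ _ _ hr u ⟨le_rfl, huv⟩ v ⟨huv, le_rfl⟩ S' hS')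
    obtain ⟨y, hy, hxy⟩ := n1 x hx
    obtain ⟨z, hz, hyz⟩ := n2 y hy
    exact ⟨z, hz, by linarith [dist_triangle x y z]⟩
  choose! N hN using key
  refine ⟨N, fun ℓ lam π hb u hu v hv => ?_⟩
  rcases le_total u v with h | h
  · exact fun Q hQ => hN Q hQ ℓ lam π hb u hu v hv h
  · exact Rigid.symm fun Q hQ => hN Q hQ ℓ lam π hb v hv u hu h

end Contracting

section ContractingRay

variable {Y : Type*} [MetricSpace Y]

theorem exists_ray_proj {γ : ℝ≥0 → Y} (hγ : Isometry γ) (x : Y) :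
    ∃ t : ℝ≥0, dist x (γ t) = Metric.infDist x (Set.range γ) := by
  have hc : Continuous fun t => dist x (γ t) := by
    have := hγ.continuous
    fun_prop
  have ht : Filter.Tendsto (fun t => dist x (γ t)) (Filter.cocompact ℝ≥0) Filter.atTop := by
    have h1 : Filter.Tendsto (fun t : ℝ≥0 => dist t 0 - dist x (γ 0)) (Filter.cocompact ℝ≥0)
        Filter.atTop :=
      Filter.tendsto_atTop_add_const_right _ _ (tendsto_dist_right_cocompact_atTop 0)
    refine Filter.tendsto_atTop_mono (fun t => ?_) h1
    rw [← hγ.dist_eq]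
    have := dist_triangle (γ t) x (γ 0)
    rw [dist_comm (γ t) x] at this
    linarith
  obtain ⟨t, h⟩ := hc.exists_forall_le ht
  refine ⟨t, le_antisymm ?_ (Metric.infDist_le_dist_of_mem ⟨t, rfl⟩)⟩
  rw [Metric.le_infDist ⟨_, Set.mem_range_self t⟩]
  rintro _ ⟨s, rfl⟩
  exact h s

/-- Contraction at a single point implies bounded geodesic image: a geodesic staying away from the
ray has bounded projection. -/
theorem proj_dist_le_of_far {A : Set Y} {γ : ℝ → Y} {π : Y → ℝ} {C : ℝ} (hC : 0 ≤ C)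
    (hd : ∀ x y, dist (γ (π x)) (γ (π y)) = |π y - π x|)
    (hπ : ∀ x, dist x (γ (π x)) = Metric.infDist x A)
    (hcon : ∀ x y, dist x y < Metric.infDist x A → |π x - π y| ≤ C) {η : ℝ → Y} {s t : ℝ}
    (hst : s ≤ t) (hη : ∀ u ∈ Set.Icc s t, ∀ v ∈ Set.Icc s t, dist (η u) (η v) = |v - u|)
    (hfar : ∀ u ∈ Set.Icc s t, 2 * C + 1 < Metric.infDist (η u) A) :
    |π (η s) - π (η t)| ≤ 6 * C + 2 := by
  have ms : s ∈ Set.Icc s t := ⟨le_rfl, hst⟩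
  have mt : t ∈ Set.Icc s t := ⟨hst, le_rfl⟩
  have close : ∀ u ∈ Set.Icc s t, ∀ v ∈ Set.Icc s t, |v - u| < Metric.infDist (η u) A →
      |π (η u) - π (η v)| ≤ C := fun u hu v hv h => hcon _ _ (by rwa [hη u hu v hv])
  set d₀ := Metric.infDist (η s) A with hd₀
  set d₁ := Metric.infDist (η t) A with hd₁
  have h0 := hfar s ms
  have h1 := hfar t mt
  rw [← hd₀] at h0
  rw [← hd₁] at h1
  rcases lt_or_ge (t - s) (d₀ + d₁ - 2) with hm | hm
  · have mu : min (s + d₀ - 1) t ∈ Set.Icc s t := ⟨le_min (by linarith) hst, min_le_right _ _⟩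
    have e1 := close s ms _ mu (by
      rw [abs_of_nonneg (by linarith [mu.1])]
      linarith [min_le_left (s + d₀ - 1) t])
    have e2 := close t mt _ mu (by
      rw [abs_of_nonpos (by linarith [mu.2])]
      rcases min_cases (s + d₀ - 1) t with h | h <;> rw [h.1] <;> linarith)
    rw [abs_sub_comm] at e2
    linarith [abs_sub_le (π (η s)) (π (η (min (s + d₀ - 1) t))) (π (η t))]
  · have m₁ : s + d₀ - 1 ∈ Set.Icc s t := ⟨by linarith, by linarith⟩
    have m₂ : t - d₁ + 1 ∈ Set.Icc s t := ⟨by linarith, by linarith⟩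
    have e1 := close s ms _ m₁ (by rw [abs_of_nonneg (by linarith)]; linarith)
    have e2 := close t mt _ m₂ (by rw [abs_of_nonpos (by linarith)]; linarith)
    have e3 := abs_sub_le_of_steps (f := fun u => π (η u)) hC (by linarith : 0 < 2 * C + 1)
      (by linarith : s + d₀ - 1 ≤ t - d₁ + 1) (by
        intro u hu v hv huv
        have hu' : u ∈ Set.Icc s t := ⟨m₁.1.trans hu.1, hu.2.trans m₂.2⟩
        exact close u hu' v ⟨m₁.1.trans hv.1, hv.2.trans m₂.2⟩ (huv.trans_lt (hfar u hu')))
    set m := t - d₁ + 1 - (s + d₀ - 1) with hmdef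
    have hm0 : 0 ≤ m := by linarith
    have e4 : C * (m / (2 * C + 1) + 1) ≤ m / 2 + C := by
      have : C * (m / (2 * C + 1)) ≤ m / 2 := by
        rw [show C * (m / (2 * C + 1)) = (C * m) / (2 * C + 1) by ring,
          div_le_iff₀ (by linarith)]
        nlinarith
      linarith
    rw [abs_sub_comm] at e2
    have a1 := abs_sub_le (π (η s)) (π (η (s + d₀ - 1))) (π (η t))
    have a2 := abs_sub_le (π (η (s + d₀ - 1))) (π (η (t - d₁ + 1))) (π (η t))
    have e5 := hη s ms t mt
    rw [abs_of_nonneg (by linarith)] at e5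
    have e6 := dist_triangle4 (η s) (γ (π (η s))) (γ (π (η t))) (η t)
    rw [hπ, hd, dist_comm (γ (π (η t))) (η t), hπ, abs_sub_comm (π (η t))] at e6
    linarith

/-- Strongly contracting rays have bounded geodesic image. -/
theorem IsStronglyContractingRay.exists_boundedImage {γ : ℝ≥0 → Y} (h : IsStronglyContractingRay γ) :
    ∃ (c : ℝ) (π : Y → ℝ), BoundedImage c (Set.Ici 0) (fun t => γ t.toNNReal) π := by
  obtain ⟨hγ, C, hC, hcontr⟩ := h
  choose π₀ hπ₀ using exists_ray_proj hγ
  set A := Set.range γ with hA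
  set π : Y → ℝ := fun x => (π₀ x : ℝ) with hπd
  set lam : ℝ → Y := fun t => γ t.toNNReal with hlam
  have hlamπ : ∀ x, lam (π x) = γ (π₀ x) := fun x => by simp [hlam, hπd]
  have hπ : ∀ x, dist x (lam (π x)) = Metric.infDist x A := fun x => by rw [hlamπ, hπ₀]
  have hiso : ∀ s ∈ Set.Ici (0 : ℝ), ∀ t ∈ Set.Ici (0 : ℝ), dist (lam s) (lam t) = |t - s| := by
    intro s hs t ht
    rw [hγ.dist_eq, NNReal.dist_eq, Real.coe_toNNReal _ hs, Real.coe_toNNReal _ ht, abs_sub_comm]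
  have hmem : ∀ x, π x ∈ Set.Ici (0 : ℝ) := fun x => (π₀ x).2
  have hd : ∀ x y, dist (lam (π x)) (lam (π y)) = |π y - π x| :=
    fun x y => hiso _ (hmem x) _ (hmem y)
  have hcon : ∀ x y, dist x y < Metric.infDist x A → |π x - π y| ≤ C := by
    intro x y hxy
    rw [abs_sub_comm, ← hd, hlamπ, hlamπ]
    exact hcontr x x (Metric.mem_ball_self (dist_nonneg.trans_lt hxy)) y
      (by rwa [Metric.mem_ball, dist_comm]) _ ⟨_, rfl⟩ _ ⟨_, rfl⟩ (hπ₀ x) (hπ₀ y)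
  have hlip : ∀ x y, |π x - π y| ≤ 2 * dist x y + 2 * Metric.infDist x A := by
    intro x y
    have h1 := dist_triangle4 (lam (π x)) x y (lam (π y))
    rw [hd, abs_sub_comm, dist_comm _ x, hπ, hπ] at h1
    have h2 := Metric.infDist_le_infDist_add_dist (s := A) (x := y) (y := x)
    rw [dist_comm y x] at h2
    linarith
  set K := 2 * C + 1 with hK
  set c₀ := 6 * C + 2 with hc₀
  set c₁ := c₀ + 2 * K + 2 with hc₁
  set J := C + 4 with hJ
  -- a geodesic between points with distant projections ends by leaving the ray near the projection
  have last : ∀ (η : ℝ → Y) (s t : ℝ), s ≤ t →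
      (∀ u ∈ Set.Icc s t, ∀ v ∈ Set.Icc s t, dist (η u) (η v) = |v - u|) →
      c₀ < |π (η s) - π (η t)| →
      ∃ u ∈ Set.Icc s t, Metric.infDist (η u) A ≤ K ∧ |π (η u) - π (η t)| ≤ c₁ := by
    intro η s t hst hη hbig
    obtain ⟨u₀, hu₀, hu₀K⟩ : ∃ u ∈ Set.Icc s t, Metric.infDist (η u) A ≤ K := by
      by_contra hcon'
      push Not at hcon'
      exact absurd (proj_dist_le_of_far hC hd hπ hcon hst hη hcon') (not_le.2 hbig)
    obtain ⟨u, hu, huK, hul⟩ := exists_coarse_last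
      (fun u => Metric.infDist (η u) A ≤ K) hu₀ hu₀K
    have hu' : u ∈ Set.Icc s t := ⟨hu₀.1.trans hu.1, hu.2⟩
    refine ⟨u, hu', huK, ?_⟩
    have small : ∀ v ∈ Set.Icc s t, |v - u| ≤ 1 → |π (η u) - π (η v)| ≤ 2 * K + 2 := by
      intro v hv huv
      have := hlip (η u) (η v)
      rw [hη u hu' v hv] at this
      linarith
    rcases lt_or_ge t (u + 1) with hlt | hge
    · have := small t ⟨hst, le_rfl⟩ (by rw [abs_of_nonneg (by linarith [hu.2])]; linarith)
      linarith
    · have m : u + 1 ∈ Set.Icc s t := ⟨by linarith [hu'.1], hge⟩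
      have e1 := small _ m (by simp)
      have e2 := proj_dist_le_of_far hC hd hπ hcon hge
        (fun a ha b hb => hη a ⟨m.1.trans ha.1, ha.2⟩ b ⟨m.1.trans hb.1, hb.2⟩)
        (fun a ha => not_le.1 (hul a ha))
      linarith [abs_sub_le (π (η u)) (π (η (u + 1))) (π (η t))]
  have pass : ∀ a b S, Seg a b S → 2 * c₀ + K + c₁ + J < π b - π a → ∀ t, π a ≤ t → t ≤ π b →
      ∃ m ∈ S, dist m (lam t) ≤ K + c₁ + J := by
    intro a b S hS hbig t hat htb
    have ht0 : t ∈ Set.Ici (0 : ℝ) := (hmem a).trans hat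
    obtain ⟨η, ℓ, ⟨hℓ, rfl, rfl, hη⟩, rfl⟩ := hS
    have jump : ∀ u ∈ Set.Icc 0 ℓ, ∀ v ∈ Set.Icc 0 ℓ, |v - u| ≤ 1 →
        |π (η u) - π (η v)| ≤ J := by
      intro u hu v hv huv
      rcases lt_or_ge 1 (Metric.infDist (η u) A) with h1 | h1
      · have := hcon (η u) (η v) (by rw [hη u hu v hv]; linarith)
        linarith
      · have := hlip (η u) (η v)
        rw [hη u hu v hv] at this
        linarith
    obtain ⟨u, hu, hut⟩ : ∃ u ∈ Set.Icc 0 ℓ, |π (η u) - t| ≤ J := by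
      obtain ⟨u, hu, hPu, hlast⟩ := exists_coarse_last (a := 0) (b := ℓ)
        (fun u => π (η u) ≤ t) ⟨le_rfl, hℓ⟩ hat
      refine ⟨u, hu, ?_⟩
      rw [abs_of_nonpos (by linarith)]
      rcases lt_or_ge ℓ (u + 1) with hlt | hge
      · have := abs_le.1 (jump u hu ℓ ⟨hℓ, le_rfl⟩
          (by rw [abs_of_nonneg (by linarith [hu.2])]; linarith))
        linarith [this.1]
      · have h1 := not_le.1 (hlast (u + 1) ⟨le_rfl, hge⟩)
        have := abs_le.1 (jump u hu (u + 1) ⟨by linarith [hu.1], hge⟩ (by simp))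
        linarith [this.1]
    have fin : ∀ m, Metric.infDist m A ≤ K → |π m - π (η u)| ≤ c₁ →
        dist m (lam t) ≤ K + c₁ + J := by
      intro m h1 h2
      have h3 := dist_triangle m (lam (π m)) (lam t)
      rw [hπ, hiso _ (hmem m) t ht0, abs_sub_comm t] at h3
      linarith [abs_sub_le (π m) (π (η u)) t]
    rcases lt_or_ge c₀ |π (η 0) - π (η u)| with h1 | h1
    · obtain ⟨v, hv, h2, h3⟩ := last η 0 u hu.1
        (fun x hx y hy => hη x ⟨hx.1, hx.2.trans hu.2⟩ y ⟨hy.1, hy.2.trans hu.2⟩) h1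
      exact ⟨η v, ⟨v, ⟨hv.1, hv.2.trans hu.2⟩, rfl⟩, fin _ h2 h3⟩
    · have h2 : c₀ < |π (η ℓ) - π (η u)| := by
        rw [lt_abs]; left
        have := (abs_le.1 h1).1
        linarith
      obtain ⟨v, hv, h3, h4⟩ := last (fun x => η (-x)) (-ℓ) (-u) (by linarith [hu.2])
        (fun x hx y hy => by
          rw [hη (-x) ⟨by linarith [hx.2, hu.1], by linarith [hx.1]⟩ (-y)
            ⟨by linarith [hy.2, hu.1], by linarith [hy.1]⟩, ← abs_neg]
          congr 1; ring) (by simpa using h2)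
      rw [neg_neg] at h4
      exact ⟨η (-v), ⟨-v, ⟨by linarith [hv.2, hu.1], by linarith [hv.1]⟩, rfl⟩, fin _ h3 h4⟩
  have hJ0 : 0 ≤ J := by linarith
  refine ⟨2 * c₀ + K + c₁ + J, π, hiso, hmem, ?_, ?_⟩
  · intro t ht
    have h1 := hπ (lam t)
    rw [Metric.infDist_zero_of_mem (show lam t ∈ A from ⟨_, rfl⟩), hiso t ht _ (hmem _)] at h1
    rw [h1]; linarith
  · intro a b S hS hbig t ht
    rcases Set.mem_uIcc.1 ht with ht | ht
    · obtain ⟨m, hm, h1⟩ := pass a b S hS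
        (by rwa [abs_sub_comm, abs_of_nonneg (by linarith)] at hbig) t ht.1 ht.2
      exact ⟨m, hm, by linarith⟩
    · obtain ⟨m, hm, h1⟩ := pass b a S hS.symm
        (by rwa [abs_of_nonneg (by linarith)] at hbig) t ht.1 ht.2
      exact ⟨m, hm, by linarith⟩

end ContractingRay

section Separation

variable {G Y : Type*} [Group G] [MetricSpace Y] [MulAction G Y]

/-- Unless all pairs of orbit points are uniformly Morse, there is an element `p` such that no
point projects far both to `lam` and to `p • lam`, for contracting geodesics `lam` starting near
the base point. -/
theorem exists_separating_translate (hY : IsGeodesicSpace Y)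
    (hG : ∀ g : G, Isometry fun x : Y => g • x) (o : Y)
    (hne : ¬ ∃ N : ℝ → ℝ, ∀ p : G, Rigid N o (p • o)) (c R : ℝ) (hc : 0 ≤ c) (hR : 0 ≤ R) :
    ∃ (p : G) (T : ℝ), 0 ≤ T ∧ ∀ (ℓ : ℝ) (lam : ℝ → Y) (π : Y → ℝ),
      BoundedImage c (Set.Icc 0 ℓ) lam π → dist (lam 0) o ≤ R → ∀ z, π z < T ∨ π (p⁻¹ • z) < T := by
  by_contra hcon
  push Not at hcon
  obtain ⟨N, hN⟩ := BoundedImage.rigid hY c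
  obtain ⟨N', hN'⟩ := exists_rigid_path hY N
  obtain ⟨N'', hN''⟩ := Rigid.perturb hY N' hR
  refine hne ⟨N'', fun p => ?_⟩
  set d := dist o (p • o) + 2 * R with hd
  have hd0 : 0 ≤ d := by positivity
  set r := 6 * (d + 3 * c + 1) + 10 * c with hr
  obtain ⟨ℓ, lam, π, hb, hlam, z, hz, hz'⟩ := hcon p (r + d + 10 * c + 1) (by positivity)
  have hb' := hb.smul hG p
  set lam' : ℝ → Y := fun t => p • lam t with hlam'
  set π' : Y → ℝ := fun x => π (p⁻¹ • x) with hπ'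
  have hℓ := (hb.proj_mem z).2
  have h0 : (0 : ℝ) ∈ Set.Icc 0 ℓ := ⟨le_rfl, by linarith⟩
  have hr0 : r ∈ Set.Icc 0 ℓ := ⟨by positivity, by linarith⟩
  have hdd : dist (lam 0) (lam' 0) ≤ d := by
    have h1 := dist_triangle4 (lam 0) o (p • o) (lam' 0)
    have h2 : dist (p • o) (lam' 0) = dist o (lam 0) := (hG p).dist_eq _ _
    rw [h2, dist_comm o (lam 0)] at h1
    linarith
  have e1 := abs_le.1 (hb'.proj_self 0 h0)
  have e2 := abs_le.1 (hb.proj_self 0 h0)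
  have e3 := abs_le.1 (hb.lipschitz hY (lam' 0) (lam 0))
  rw [dist_comm] at e3
  obtain ⟨S, hS⟩ := hY.exists_seg (lam' 0) z
  have p1 := hb.pass _ _ _ hS (by
    rw [abs_sub_comm, lt_abs]; left; linarith [e1.2, e2.2, e3.2]) r
    (Set.mem_uIcc.2 (Or.inl ⟨by linarith [e1.2, e2.2, e3.2], by linarith⟩))
  have p2 := hb'.pass _ _ _ hS (by
    rw [abs_sub_comm, lt_abs]; left; linarith [e1.2])
  obtain ⟨η, L, ⟨hL, hη0, rfl, hη⟩, rfl⟩ := hS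
  obtain ⟨_, ⟨u, hu, rfl⟩, hur⟩ := p1
  have hη0d : ∀ v ∈ Set.Icc 0 L, dist (lam' 0) (η v) = v := fun v hv => by
    rw [← hη0, hη 0 ⟨le_rfl, hL⟩ v hv, sub_zero, abs_of_nonneg hv.1]
  have f1 := hη0d u hu
  have f2 : dist (lam 0) (lam r) = r := by
    rw [hb.dist_eq 0 h0 r hr0, sub_zero, abs_of_nonneg hr0.1]
  have g1 := dist_triangle4 (lam' 0) (lam 0) (lam r) (η u)
  have g2 := dist_triangle4 (lam 0) (lam' 0) (η u) (lam r)
  rw [dist_comm (lam' 0) (lam 0), dist_comm (lam r)] at g1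
  have hum : u ∈ Set.Icc 0 ℓ := ⟨hu.1, by linarith⟩
  obtain ⟨_, ⟨u', hu', rfl⟩, huu'⟩ := p2 u
    (Set.mem_uIcc.2 (Or.inl ⟨by linarith [e1.2], by linarith⟩))
  have f3 := hη0d u' hu'
  have f4 : dist (lam' 0) (lam' u) = u := by
    rw [hb'.dist_eq 0 h0 u hum, sub_zero, abs_of_nonneg hum.1]
  have g3 := dist_triangle (lam' 0) (lam' u) (η u')
  have g4 := dist_triangle (lam' 0) (η u') (lam' u)
  rw [dist_comm (lam' u)] at g3
  have g5 : dist (η u) (η u') ≤ c := by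
    rw [hη u hu u' hu']; exact abs_le.2 ⟨by linarith, by linarith⟩
  have g6 := dist_triangle4 (lam r) (η u) (η u') (lam' u)
  rw [dist_comm (lam r) (η u)] at g6
  have sub : ∀ t ∈ Set.Icc 0 ℓ, Set.Icc 0 t ⊆ Set.Icc 0 ℓ := fun t ht v hv =>
    ⟨hv.1, hv.2.trans ht.2⟩
  obtain ⟨P, hP, hPN⟩ := hN' _ _ _ _ _ _
    (seg_of_isometric hr0.1 (fun x hx y hy => hb.dist_eq x (sub r hr0 hx) y (sub r hr0 hy)))
    (seg_of_isometric hum.1 (fun x hx y hy => hb'.dist_eq x (sub u hum hx) y (sub u hum hy)))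
    (by
      rintro _ ⟨x, hx, rfl⟩ _ ⟨y, hy, rfl⟩
      exact hN ℓ lam π hb x (sub r hr0 hx) y (sub r hr0 hy))
    (by
      rintro _ ⟨x, hx, rfl⟩ _ ⟨y, hy, rfl⟩
      exact hN ℓ lam' π' hb' x (sub u hum hx) y (sub u hum hy))
    (by rw [f2]; linarith)
  refine hN'' _ _ _ _ (hPN _ hP.left_mem _ hP.right_mem) (by rwa [dist_comm]) ?_
  rw [(hG p).dist_eq, dist_comm]; exact hlam

/-- If two contracting geodesics issuing from distant points `o₁` and `o₂` point away from each
other, then geodesics between points beyond their ends pass near `o₁`. -/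
theorem exists_near_of_boundedImage (hY : IsGeodesicSpace Y) {c T R ℓ : ℝ} (hT : 0 ≤ T)
    (hℓ : 2 * T + 2 * c ≤ ℓ) {τ₁ τ₂ : ℝ → Y} {π₁ π₂ : Y → ℝ}
    (h₁ : BoundedImage c (Set.Icc 0 ℓ) τ₁ π₁) (h₂ : BoundedImage c (Set.Icc 0 ℓ) τ₂ π₂) {o₁ o₂ a₁ a₂ : Y}
    (ho₁ : dist (τ₁ 0) o₁ ≤ R) (ho₂ : dist (τ₂ 0) o₂ ≤ R) (h12 : π₁ o₂ < T) (h21 : π₂ o₁ < T)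
    (ha₁ : ℓ - T < π₁ a₁) (ha₂ : ℓ - T < π₂ a₂) (hbig : 2 * (c + T + R) < dist o₁ o₂)
    {S : Set Y} (hS : Seg a₁ a₂ S) : ∃ m ∈ S, dist m o₁ ≤ 2 * c + T + R := by
  have hc := h₁.nonneg
  have hd : ∀ {τ : ℝ → Y} {π : Y → ℝ} {o : Y}, BoundedImage c (Set.Icc 0 ℓ) τ π → dist (τ 0) o ≤ R →
      ∀ t ∈ Set.Icc 0 ℓ, ∀ m, dist m (τ t) ≤ c → dist m o ≤ c + t + R := by
    intro τ π o h ho t ht m hm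
    have h3 := h.dist_eq t ht 0 ⟨le_rfl, ht.1.trans ht.2⟩
    rw [zero_sub, abs_neg, abs_of_nonneg ht.1] at h3
    linarith [dist_triangle4 m (τ t) (τ 0) o]
  have hTm : T ∈ Set.Icc 0 ℓ := ⟨hT, by linarith⟩
  have claim : π₁ a₂ ≤ T + c := by
    by_contra hcon
    push Not at hcon
    obtain ⟨A, hA⟩ := hY.exists_seg a₂ o₂
    obtain ⟨B, hB⟩ := hY.exists_seg a₂ o₁
    obtain ⟨m, hm, hmT⟩ := h₁.pass _ _ _ hA (by rw [lt_abs]; left; linarith) T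
      (Set.mem_uIcc.2 (Or.inr ⟨h12.le, by linarith⟩))
    obtain ⟨n, hn, hnT⟩ := h₂.pass _ _ _ hB (by rw [lt_abs]; left; linarith) T
      (Set.mem_uIcc.2 (Or.inr ⟨h21.le, by linarith⟩))
    have e1 := hd h₁ ho₁ T hTm m hmT
    have e2 := hd h₂ ho₂ T hTm n hnT
    have e3 := hA.dist_add m hm
    have e4 := hB.dist_add n hn
    have e5 := dist_triangle a₂ m o₁
    have e6 := dist_triangle o₁ m o₂
    have e7 := dist_triangle a₂ n o₂
    have e8 := dist_triangle o₂ n o₁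
    rw [dist_comm o₁ m] at e6
    rw [dist_comm o₂ n, dist_comm o₂ o₁] at e8
    linarith
  obtain ⟨m, hm, hmT⟩ := h₁.pass _ _ _ hS (by rw [lt_abs]; left; linarith) (T + c)
    (Set.mem_uIcc.2 (Or.inr ⟨claim, by linarith⟩))
  exact ⟨m, hm, by linarith [hd h₁ ho₁ (T + c) ⟨by linarith, by linarith⟩ m hmT]⟩

/-- In the presence of a contracting ray, for every `w` moving the base point `o` far, there is a
finite set `F` such that every point has two translates by elements of `F` with the property that
geodesics between them pass near `o` and `w • o`. -/
theorem exists_finite_set_pass (hY : IsGeodesicSpace Y)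
    (hG : ∀ g : G, Isometry fun x : Y => g • x) (o : Y)
    (hcoc : ∃ R : ℝ, ∀ x : Y, ∃ g : G, dist x (g • o) ≤ R)
    (hcontr : ∃ γ : ℝ≥0 → Y, IsStronglyContractingRay γ)
    (hne : ¬ ∃ N : ℝ → ℝ, ∀ p : G, Rigid N o (p • o)) :
    ∃ C D : ℝ, 0 ≤ C ∧ ∀ w : G, D < dist o (w • o) → ∃ F : Set G, F.Finite ∧ ∀ y : Y,
      ∃ f₁ ∈ F, ∃ f₂ ∈ F, ∀ S, Seg (f₁ • y) (f₂ • y) S →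
        (∃ m ∈ S, dist m o ≤ C) ∧ ∃ m ∈ S, dist m (w • o) ≤ C := by
  obtain ⟨R, hR⟩ := hcoc
  obtain ⟨γ, hγ⟩ := hcontr
  obtain ⟨c, π₀, hb₀⟩ := hγ.exists_boundedImage
  have hc := hb₀.nonneg
  have hR0 : 0 ≤ R := by
    obtain ⟨g, hg⟩ := hR o
    exact dist_nonneg.trans hg
  obtain ⟨p, T, hT, hsep⟩ := exists_separating_translate hY hG o hne c R hc hR0
  have choice : ∀ (ℓ : ℝ) (lam : ℝ → Y) (π : Y → ℝ), BoundedImage c (Set.Icc 0 ℓ) lam π →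
      dist (lam 0) o ≤ R → ∀ z, ∃ k ∈ ({1, p⁻¹} : Set G), π (k • z) < T := by
    intro ℓ lam π h1 h2 z
    rcases hsep ℓ lam π h1 h2 z with h | h
    · exact ⟨1, by simp, by simpa⟩
    · exact ⟨p⁻¹, by simp, h⟩
  set ℓ := 2 * T + 2 * c with hℓ
  have hℓ0 : 0 ≤ ℓ := by positivity
  obtain ⟨g₀, hg₀⟩ := hR (γ 0)
  have hb := (hb₀.restrict hℓ0 (fun t ht => ht.1)).smul hG g₀⁻¹
  set lam : ℝ → Y := fun t => g₀⁻¹ • γ t.toNNReal with hlam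
  set π : Y → ℝ := fun x => max 0 (min ℓ (π₀ (g₀⁻¹⁻¹ • x))) with hπ
  have hlam0 : dist (lam 0) o ≤ R := by
    rw [← (hG g₀).dist_eq]; simpa [hlam] using hg₀
  obtain ⟨s, hs⟩ := hR (lam ℓ)
  have hbr := hb.reverse.smul hG s⁻¹
  set lam' : ℝ → Y := fun t => s⁻¹ • lam (ℓ - t) with hlam'
  set π' : Y → ℝ := fun x => ℓ - π (s⁻¹⁻¹ • x) with hπ'
  have hlam'0 : dist (lam' 0) o ≤ R := by
    rw [← (hG s).dist_eq]; simpa [hlam'] using hs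
  set R₁ := R + dist o (p • o) with hR₁
  have hk : ∀ k ∈ ({1, p⁻¹} : Set G), dist (lam' 0) (k • o) ≤ R₁ := by
    rintro k (rfl | rfl)
    · rw [one_smul]; linarith [dist_nonneg (x := o) (y := p • o)]
    · have h1 := dist_triangle (lam' 0) o (p⁻¹ • o)
      have h2 : dist o (p⁻¹ • o) = dist (p • o) o := by
        rw [← (hG p).dist_eq o]; simp
      rw [h2, dist_comm (p • o)] at h1
      linarith
  refine ⟨2 * c + T + R₁, 2 * (c + T + R₁), by positivity, fun w hw => ?_⟩
  set E : Set G := (fun k : G × G => k.1⁻¹ * s⁻¹ * k.2) '' (({1, p⁻¹} : Set G) ×ˢ {1, p⁻¹}) with hE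
  have hEf : E.Finite := ((Set.toFinite _).prod (Set.toFinite _)).image _
  refine ⟨E ∪ (fun e => w * e) '' E, hEf.union (hEf.image _), fun y => ?_⟩
  obtain ⟨k, hkm, hky⟩ := choice ℓ lam π hb hlam0 y
  obtain ⟨k₁, hk₁, hk₁w⟩ := choice ℓ lam' π' hbr hlam'0 (w • o)
  obtain ⟨k₂, hk₂, hk₂w⟩ := choice ℓ lam' π' hbr hlam'0 (w⁻¹ • o)
  have b₁ := hbr.smul hG k₁⁻¹
  have b₂ := hbr.smul hG (w * k₂⁻¹)
  have s₁ : dist (k₁⁻¹ • lam' 0) o ≤ R₁ := by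
    rw [← (hG k₁).dist_eq]; simpa using hk k₁ hk₁
  have s₂ : dist ((w * k₂⁻¹) • lam' 0) (w • o) ≤ R₁ := by
    rw [← (hG (w * k₂⁻¹)⁻¹).dist_eq]
    simpa [smul_smul] using hk k₂ hk₂
  have t₁ : ℓ - T < π' (k₁⁻¹⁻¹ • (k₁⁻¹ * s⁻¹ * k) • y) := by
    simp only [hπ', smul_smul]
    rw [show s⁻¹⁻¹ * (k₁⁻¹⁻¹ * (k₁⁻¹ * s⁻¹ * k)) = k by group]
    linarith
  have t₂ : ℓ - T < π' ((w * k₂⁻¹)⁻¹ • (w * (k₂⁻¹ * s⁻¹ * k)) • y) := by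
    simp only [hπ', smul_smul]
    rw [show s⁻¹⁻¹ * ((w * k₂⁻¹)⁻¹ * (w * (k₂⁻¹ * s⁻¹ * k))) = k by group]
    linarith
  have u₁ : π' (k₁⁻¹⁻¹ • w • o) < T := by rwa [inv_inv]
  have u₂ : π' ((w * k₂⁻¹)⁻¹ • o) < T := by
    rwa [mul_inv_rev, inv_inv, mul_smul]
  refine ⟨_, Or.inl ⟨(k₁, k), ⟨hk₁, hkm⟩, rfl⟩, _, Or.inr ⟨_, ⟨(k₂, k), ⟨hk₂, hkm⟩, rfl⟩, rfl⟩,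
    fun S hS => ⟨?_, ?_⟩⟩
  · exact exists_near_of_boundedImage hY hT le_rfl b₁ b₂ s₁ s₂ u₁ u₂ t₁ t₂ hw hS
  · exact exists_near_of_boundedImage hY hT le_rfl b₂ b₁ s₂ s₁ u₂ u₁ t₂ t₁ (by rwa [dist_comm]) hS.symm

end Separation

section Taming

variable {X : Type*} [MetricSpace X]

/-- A continuous path through a given sequence of points, made of geodesics. -/
theorem exists_continuous_interpolation (hX : IsGeodesicSpace X) (v : ℕ → X) (n : ℕ) :
    ∃ p : ℝ → X, ContinuousOn p (Set.Icc 0 n) ∧ p 0 = v 0 ∧ p n = v n ∧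
      ∀ i < n, ∀ t ∈ Set.Icc (i : ℝ) (i + 1), dist (p t) (v i) ≤ dist (v i) (v (i + 1)) := by
  induction n with
  | zero => exact ⟨fun _ => v 0, continuousOn_const, rfl, rfl, fun i hi => by omega⟩
  | succ n ih =>
    obtain ⟨p, hp, hp0, hpn, hpd⟩ := ih
    obtain ⟨η, ℓ, hℓ, hη0, hηℓ, hη⟩ := hX (v n) (v (n + 1))
    set r : ℝ → X := fun t => if t ≤ n then p t else η ((t - n) * ℓ) with hr
    have r1 : ∀ t : ℝ, t ≤ n → r t = p t := fun t ht => by simp [hr, ht]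
    have r2 : ∀ t : ℝ, (n : ℝ) ≤ t → r t = η ((t - n) * ℓ) := fun t ht => by
      rcases ht.eq_or_lt with rfl | ht
      · simp [hr, hpn, hη0]
      · simp [hr, not_le.2 ht]
    have hmem : ∀ t ∈ Set.Icc (n : ℝ) (n + 1), (t - n) * ℓ ∈ Set.Icc 0 ℓ := fun t ht =>
      ⟨mul_nonneg (by linarith [ht.1]) hℓ, mul_le_of_le_one_left hℓ (by linarith [ht.2])⟩
    have hηc : ContinuousOn η (Set.Icc 0 ℓ) := by
      have : LipschitzOnWith 1 η (Set.Icc 0 ℓ) := LipschitzOnWith.of_dist_le_mul fun s hs t ht => by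
        rw [hη s hs t ht, Real.dist_eq, abs_sub_comm]; simp
      exact this.continuousOn
    have c1 : ContinuousOn r (Set.Icc 0 n) := hp.congr fun t ht => r1 t ht.2
    have c2 : ContinuousOn r (Set.Icc n (n + 1)) := by
      refine ContinuousOn.congr (f := fun t : ℝ => η ((t - n) * ℓ)) ?_ fun t ht => r2 t ht.1
      exact hηc.comp (by fun_prop) hmem
    refine ⟨r, ?_, ?_, ?_, ?_⟩
    · have := c1.union_of_isClosed c2 isClosed_Icc isClosed_Icc
      rw [Set.Icc_union_Icc_eq_Icc (by positivity) (by linarith)] at this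
      exact_mod_cast this
    · rw [r1 0 (by positivity), hp0]
    · push_cast
      rw [r2 _ (by linarith), ← hηℓ]; congr 1; ring
    · intro i hi t ht
      rcases Nat.lt_succ_iff_lt_or_eq.1 hi with h | rfl
      · have h' : (i : ℝ) + 1 ≤ n := by exact_mod_cast h
        rw [r1 t (ht.2.trans h')]
        exact hpd i h t ht
      · rw [r2 t ht.1, ← hη0, ← hηℓ, hη _ (hmem t ht) 0 ⟨le_rfl, hℓ⟩,
          hη 0 ⟨le_rfl, hℓ⟩ ℓ ⟨hℓ, le_rfl⟩, zero_sub, abs_neg, abs_of_nonneg (hmem t ht).1,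
          sub_zero, abs_of_nonneg hℓ]
        exact (hmem t ht).2

/-- Quasi-geodesics can be replaced by continuous ones. -/
theorem QPath.exists_continuous (hX : IsGeodesicSpace X) {Q : ℝ} (hQ : 1 ≤ Q) {x y : X}
    {S : Set X} (h : QPath Q x y S) : ∃ (p : ℝ → X) (b : ℝ), 0 ≤ b ∧
      QGeoOn (10 * Q ^ 2) (Set.Icc 0 b) p ∧ p 0 = x ∧ p b = y ∧
      ∀ s ∈ S, ∃ u ∈ Set.Icc 0 b, dist s (p u) ≤ 4 * Q := by
  obtain ⟨a, b, q, hab, rfl, rfl, rfl, hq⟩ := h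
  set n := ⌈b - a⌉₊ with hn
  have hn1 : b - a ≤ n := Nat.le_ceil _
  have hn2 : (n : ℝ) < b - a + 1 := Nat.ceil_lt_add_one (by linarith)
  set τ : ℝ → ℝ := fun t => min (a + t) b with hτ
  obtain ⟨p, hpc, hp0, hpn, hpd⟩ := exists_continuous_interpolation hX (fun i : ℕ => q (τ i)) n
  have hτm : ∀ t : ℝ, 0 ≤ t → τ t ∈ Set.Icc a b := fun t ht =>
    ⟨le_min (by linarith) hab, min_le_right _ _⟩
  have hτ1 : ∀ t ∈ Set.Icc (0 : ℝ) n, a + t - 1 ≤ τ t ∧ τ t ≤ a + t := fun t ht =>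
    ⟨le_min (by linarith) (by linarith [ht.2]), min_le_left _ _⟩
  have hτl : ∀ s t : ℝ, |τ t - τ s| ≤ |t - s| := fun s t => by
    refine (abs_min_sub_min_le_max _ _ _ _).trans (max_le (le_of_eq ?_) (by simp))
    congr 1; ring
  have step : ∀ s t : ℝ, 0 ≤ s → 0 ≤ t → |t - s| ≤ 1 → dist (q (τ s)) (q (τ t)) ≤ 2 * Q := by
    intro s t hs ht hst
    have h1 := (hq _ (hτm s hs) _ (hτm t ht)).2
    have h2 : Q * |τ t - τ s| ≤ Q * 1 := by gcongr; exact (hτl s t).trans hst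
    linarith
  have close : ∀ t ∈ Set.Icc (0 : ℝ) n, dist (q (τ t)) (p t) ≤ 4 * Q := by
    intro t ht
    rcases Nat.eq_zero_or_pos n with h0 | hpos
    · have : t = 0 := le_antisymm (by simpa [h0] using ht.2) ht.1
      subst this
      rw [hp0]; simp; linarith
    · obtain ⟨i, hi, hti⟩ : ∃ i < n, t ∈ Set.Icc (i : ℝ) (i + 1) := by
        rcases ht.2.lt_or_eq with h1 | h1
        · exact ⟨⌊t⌋₊, (Nat.floor_lt ht.1).2 h1, Nat.floor_le ht.1, (Nat.lt_floor_add_one t).le⟩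
        · refine ⟨n - 1, by omega, ?_⟩
          rw [h1, Nat.cast_sub hpos]
          constructor <;> simp
      have e1 := hpd i hi t hti
      have e2 := step i (i + 1 : ℕ) (by positivity) (by positivity) (by simp)
      have e3 := step t i ht.1 (by positivity) (by
        rw [abs_of_nonpos (by linarith [hti.1])]; linarith [hti.2])
      have e4 := dist_triangle (q (τ t)) (q (τ i)) (p t)
      rw [dist_comm (q (τ i)) (p t)] at e4
      linarith
  refine ⟨p, n, by positivity, ⟨hpc, fun s hs t ht => ?_⟩, ?_, ?_, ?_⟩
  · have e1 := hq _ (hτm s hs.1) _ (hτm t ht.1)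
    have e2 := hτl s t
    have e3 : |t - s| - 1 ≤ |τ t - τ s| := by
      have a1 := hτ1 s hs
      have a2 := hτ1 t ht
      rcases abs_cases (t - s) with h | h <;> rcases abs_cases (τ t - τ s) with h' | h' <;>
        linarith [a1.1, a1.2, a2.1, a2.2]
    have e4 := close s hs
    have e5 := close t ht
    have e6 := dist_triangle4 (q (τ s)) (p s) (p t) (q (τ t))
    have e7 := dist_triangle4 (p s) (q (τ s)) (q (τ t)) (p t)
    rw [dist_comm (p t)] at e6
    rw [dist_comm (p s) (q (τ s))] at e7
    have e8 : Q * |τ t - τ s| ≤ Q * |t - s| := by gcongr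
    have hQ2 : Q ≤ Q ^ 2 := by nlinarith
    have hd0 : 0 ≤ dist (p s) (p t) := dist_nonneg
    have ha0 := abs_nonneg (t - s)
    constructor
    · have e9 : Q * dist (q (τ s)) (q (τ t)) ≤ Q * (dist (p s) (p t) + 8 * Q) := by
        gcongr; linarith
      have e10 : |t - s| ≤ Q * dist (p s) (p t) + 10 * Q ^ 2 := by nlinarith
      have e11 : |t - s| / (10 * Q ^ 2) ≤ dist (p s) (p t) + 1 := by
        rw [div_le_iff₀ (by positivity)]
        nlinarith [mul_nonneg hd0 (by positivity : 0 ≤ Q ^ 2)]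
      nlinarith
    · have : Q * |t - s| ≤ 10 * Q ^ 2 * |t - s| := by gcongr; linarith
      nlinarith
  · rw [hp0]; simp [hτ, hab]
  · rw [hpn]; simp only [hτ]; rw [min_eq_right (by linarith)]
  · rintro _ ⟨r, hr, rfl⟩
    have hm : r - a ∈ Set.Icc (0 : ℝ) n := ⟨by linarith [hr.1], by linarith [hr.2]⟩
    refine ⟨r - a, hm, ?_⟩
    have := close _ hm
    simp only [hτ] at this
    rwa [show a + (r - a) = r by ring, min_eq_left hr.2] at this

theorem isometric_of_ray {γ : ℝ≥0 → X} (hγ : Isometry γ) :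
    ∀ s ∈ Set.Ici (0 : ℝ), ∀ t ∈ Set.Ici (0 : ℝ),
      dist (γ s.toNNReal) (γ t.toNNReal) = |t - s| := by
  intro s hs t ht
  rw [hγ.dist_eq, NNReal.dist_eq, Real.coe_toNNReal _ hs, Real.coe_toNNReal _ ht, abs_sub_comm]

/-- Pairs of points on `M`-Morse rays are uniformly Morse. -/
theorem IsMorseRayWith.rigid (hX : IsGeodesicSpace X) (M : ℝ → ℝ) :
    ∃ N : ℝ → ℝ, ∀ γ : ℝ≥0 → X, IsMorseRayWith M γ → ∀ s t : ℝ≥0, Rigid N (γ s) (γ t) := by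
  have key : ∀ Q : ℝ, 1 ≤ Q → ∃ D', ∀ γ : ℝ≥0 → X, IsMorseRayWith M γ → ∀ s t : ℝ≥0, s ≤ t →
      RigidAt Q D' (γ s) (γ t) := by
    intro Q hQ
    set D := |M (10 * Q ^ 2)| + 4 * Q with hDd
    have hD : 0 ≤ D := by positivity
    refine ⟨D + (D + Q * (Q * (2 * D + 2 * Q) + Q) + Q), ?_⟩
    intro γ hγ s t hst S S' hS hS' x hx
    have hseg := (seg_of_isometric (η := fun t : ℝ => γ t.toNNReal) (s := s) (t := t)
      (by exact_mod_cast hst) fun u hu v hv => isometric_of_ray hγ.1 u (s.2.trans hu.1) v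
        (s.2.trans hv.1)).qpath.mono hQ
    simp only [Real.toNNReal_coe] at hseg
    have near : ∀ S, QPath Q (γ s) (γ t) S →
        Near D S ((fun t : ℝ => γ t.toNNReal) '' Set.Icc (s : ℝ) t) := by
      intro S hS x hx
      obtain ⟨p, b, hb, hp, hp0, hpb, hSp⟩ := hS.exists_continuous hX hQ
      obtain ⟨u, hu, hxu⟩ := hSp x hx
      obtain ⟨v, hv, huv⟩ := hγ.2 (10 * Q ^ 2) (by nlinarith) s s.2 t t.2 (by exact_mod_cast hst)
        p 0 b hb hp (by simpa using hp0) (by simpa using hpb) u hu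
      refine ⟨_, ⟨v, hv, rfl⟩, ?_⟩
      have := le_abs_self (M (10 * Q ^ 2))
      linarith [dist_triangle x (p u) (γ v.toNNReal)]
    obtain ⟨y, hy, hxy⟩ := near S hS x hx
    obtain ⟨z, hz, hyz⟩ := near_of_near hQ hD hseg hS' (near S' hS') y hy
    exact ⟨z, hz, by linarith [dist_triangle x y z]⟩
  choose! N hN using key
  refine ⟨N, fun γ hγ s t => ?_⟩
  rcases le_total s t with h | h
  · exact fun Q hQ => hN Q hQ γ hγ s t h
  · exact Rigid.symm fun Q hQ => hN Q hQ γ hγ t s h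

end Taming

section Orbits

variable {G X Y : Type*} [Group G] [MetricSpace X] [MulAction G X] [MetricSpace Y] [MulAction G Y]

theorem IsGeometricAction.exists_dist_le (hG : IsGeometricAction G X) (x₀ : X) :
    ∃ R : ℝ, ∀ x : X, ∃ g : G, dist x (g • x₀) ≤ R := by
  obtain ⟨hiso, -, K, hK, hKc⟩ := hG
  obtain ⟨R, hR⟩ := hK.isBounded.subset_closedBall x₀
  refine ⟨R, fun x => ?_⟩
  obtain ⟨g, k, hk, rfl⟩ := hKc x
  exact ⟨g, by rw [(hiso g).dist_eq]; exact hR hk⟩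

theorem IsGeometricAction.orbit_dist_le (hX : IsGeodesicSpace X) (hGX : IsGeometricAction G X)
    (x₀ : X) (hGY : ∀ g : G, Isometry fun y : Y => g • y) (o : Y) :
    ∃ A : ℝ, 1 ≤ A ∧ ∀ g h : G, dist (g • o) (h • o) ≤ A * dist (g • x₀) (h • x₀) + A := by
  obtain ⟨R, hR⟩ := hGX.exists_dist_le x₀
  choose κ hκ using hR
  have hR0 : 0 ≤ R := dist_nonneg.trans (hκ x₀)
  obtain ⟨B, hB⟩ := ((hGX.2.1 x₀ (2 * R + 1)).image fun g => dist o (g • o)).bddAbove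
  have hstep : ∀ g h : G, dist (g • x₀) (h • x₀) ≤ 2 * R + 1 → dist (g • o) (h • o) ≤ max B 0 := by
    intro g h hgh
    rw [← (hGX.1 g⁻¹).dist_eq] at hgh
    rw [← (hGY g⁻¹).dist_eq]
    simp only [smul_smul, inv_mul_cancel, one_smul] at hgh ⊢
    exact (hB ⟨_, hgh, rfl⟩).trans (le_max_left _ _)
  set C := max B 0 with hC
  have hC0 : 0 ≤ C := le_max_right _ _
  refine ⟨3 * C + 1, by linarith, fun g h => ?_⟩
  obtain ⟨η, ℓ, hℓ, hη0, hηℓ, hη⟩ := hX (g • x₀) (h • x₀)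
  have hd : dist (g • x₀) (h • x₀) = ℓ := by
    rw [← hη0, ← hηℓ, hη 0 ⟨le_rfl, hℓ⟩ ℓ ⟨hℓ, le_rfl⟩, sub_zero, abs_of_nonneg hℓ]
  set n := ⌈ℓ⌉₊
  have hn1 : ℓ ≤ n := Nat.le_ceil _
  have hn2 : (n : ℝ) < ℓ + 1 := Nat.ceil_lt_add_one hℓ
  set k : ℕ → G := fun i => κ (η (min i ℓ))
  have hm : ∀ i : ℕ, min (i : ℝ) ℓ ∈ Set.Icc 0 ℓ := fun i =>
    ⟨le_min (by positivity) hℓ, min_le_right _ _⟩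
  have e1 : dist (k 0 • o) (k n • o) ≤ ∑ i ∈ Finset.range n, C := by
    refine dist_le_range_sum_of_dist_le (f := fun i => k i • o) n fun {i} _ => hstep _ _ ?_
    have f1 : dist (η (min i ℓ)) (k i • x₀) ≤ R := hκ _
    have f2 : dist (η (min (i + 1 : ℕ) ℓ)) (k (i + 1) • x₀) ≤ R := hκ _
    have f3 := dist_triangle4 (k i • x₀) (η (min i ℓ)) (η (min (i + 1 : ℕ) ℓ)) (k (i + 1) • x₀)
    have f4 : dist (η (min i ℓ)) (η (min (i + 1 : ℕ) ℓ)) ≤ 1 := by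
      rw [hη _ (hm i) _ (hm (i + 1))]
      refine (abs_min_sub_min_le_max _ _ _ _).trans (by simp)
    rw [dist_comm (k i • x₀) (η (min i ℓ))] at f3
    linarith
  have e2 : dist (g • o) (k 0 • o) ≤ C := hstep _ _ (by
    have := hκ (η (min (0 : ℕ) ℓ))
    rw [Nat.cast_zero, min_eq_left hℓ, hη0] at this
    have h' : k 0 = κ (g • x₀) := by simp only [k, Nat.cast_zero, min_eq_left hℓ, hη0]
    rw [h']; linarith)
  have e3 : dist (k n • o) (h • o) ≤ C := hstep _ _ (by
    have := hκ (h • x₀)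
    have h' : k n = κ (h • x₀) := by simp only [k, min_eq_right hn1, hηℓ]
    rw [h', dist_comm]; linarith)
  have e4 := dist_triangle4 (g • o) (k 0 • o) (k n • o) (h • o)
  rw [Finset.sum_const, Finset.card_range, nsmul_eq_mul] at e1
  rw [hd]
  have : (n : ℝ) * C ≤ (ℓ + 1) * C := by gcongr
  nlinarith

/-- Two geodesic spaces with geometric actions of the same group are quasi-isometric. -/
theorem exists_quasi_isometry (hX : IsGeodesicSpace X) (hGX : IsGeometricAction G X) (x₀ : X)
    (hY : IsGeodesicSpace Y) (hGY : IsGeometricAction G Y) (o : Y) :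
    ∃ (f : X → Y) (A : ℝ), 1 ≤ A ∧ (∀ x x', dist (f x) (f x') ≤ A * dist x x' + A) ∧
      (∀ x x', dist x x' ≤ A * dist (f x) (f x') + A) ∧ ∀ g : G, ∀ x,
        dist (f x) (g • o) ≤ A * dist x (g • x₀) + A := by
  obtain ⟨A₁, hA₁, h₁⟩ := hGX.orbit_dist_le hX x₀ hGY.1 o
  obtain ⟨A₂, hA₂, h₂⟩ := hGY.orbit_dist_le hY o hGX.1 x₀
  obtain ⟨R, hR⟩ := hGX.exists_dist_le x₀
  choose κ hκ using hR
  have hR0 : 0 ≤ R := dist_nonneg.trans (hκ x₀)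
  set A := A₁ * (2 * R + 1) + A₂ + 2 * R with hA
  have hA₁A : A₁ ≤ A := by nlinarith
  have hA₂A : A₂ ≤ A := by nlinarith
  refine ⟨fun x => κ x • o, A, by linarith, ?_, ?_, ?_⟩
  · intro x x'
    have e1 := h₁ (κ x) (κ x')
    have e2 := dist_triangle4 (κ x • x₀) x x' (κ x' • x₀)
    rw [dist_comm (κ x • x₀) x] at e2
    have e3 : A₁ * dist (κ x • x₀) (κ x' • x₀) ≤ A₁ * (dist x x' + 2 * R) := by
      gcongr; linarith [hκ x, hκ x']
    have e4 : A₁ * dist x x' ≤ A * dist x x' := by gcongr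
    simp only
    nlinarith
  · intro x x'
    have e1 := h₂ (κ x) (κ x')
    have e2 := dist_triangle4 x (κ x • x₀) (κ x' • x₀) x'
    rw [dist_comm (κ x' • x₀) x'] at e2
    have e4 : A₂ * dist (κ x • o) (κ x' • o) ≤ A * dist (κ x • o) (κ x' • o) := by gcongr
    have := hκ x
    have := hκ x'
    simp only
    nlinarith
  · intro g x
    have e1 := h₁ (κ x) g
    have e2 := dist_triangle (κ x • x₀) x (g • x₀)
    rw [dist_comm (κ x • x₀) x] at e2
    have e3 : A₁ * dist (κ x • x₀) (g • x₀) ≤ A₁ * (dist x (g • x₀) + 2 * R) := by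
      gcongr; linarith [hκ x]
    have e4 : A₁ * dist x (g • x₀) ≤ A * dist x (g • x₀) := by gcongr
    simp only
    nlinarith

/-- If all pairs of orbit points are uniformly Morse, then the space is hyperbolic. -/
theorem IsGeometricAction.gromovHyperbolic (hX : IsGeodesicSpace X)
    (hGX : IsGeometricAction G X) (x₀ : X) (N : ℝ → ℝ)
    (h : ∀ g : G, Rigid N x₀ (g • x₀)) : GromovHyperbolic X := by
  obtain ⟨R, hR⟩ := hGX.exists_dist_le x₀
  have hR0 : 0 ≤ R := by
    obtain ⟨g, hg⟩ := hR x₀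
    exact dist_nonneg.trans hg
  obtain ⟨N', hN'⟩ := Rigid.perturb hX N hR0
  refine gromovHyperbolic_of_rigid hX N' fun x y => ?_
  obtain ⟨g, hg⟩ := hR x
  obtain ⟨k, hk⟩ := hR y
  have := (h (g⁻¹ * k)).smul hGX.1 g
  rw [smul_smul, mul_inv_cancel_left] at this
  exact hN' _ _ _ _ this hg hk

end Orbits

section Gauges

variable {X : Type*} [MetricSpace X]

/-- In a space with the Morse local-to-global property, countably many Morse gauges suffice for all
Morse rays. -/
theorem MLTG.exists_countable_gauges (h : MLTG X) :
    ∃ 𝓜 : Set (ℝ → ℝ), 𝓜.Countable ∧ (∀ M ∈ 𝓜, IsMorseGauge M) ∧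
      ∀ γ : ℝ≥0 → X, IsMorseRay γ → ∃ M ∈ 𝓜, IsMorseRayWith M γ := by
  let good : ℕ × List ℕ → (ℝ → ℝ) → Prop := fun i M' => IsMorseGauge M' ∧ ∃ M₁ : ℝ → ℝ,
    (∀ γ : ℝ≥0 → X, LocMorseQGeoOn 1 M₁ i.1 (Set.Ici 0) (fun t : ℝ => γ t.toNNReal) →
      MorseOn M' (Set.Ici 0) (fun t : ℝ => γ t.toNNReal)) ∧
    (∀ Q : ℝ, 1 ≤ Q → Q < i.1 + 2 → (i.2.getD ⌊Q⌋₊ 0 : ℝ) ≤ M₁ Q) ∧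
    ∀ Q : ℝ, i.1 + 2 ≤ Q → Q ^ 4 ≤ M₁ Q
  choose M' hM' using fun i : {i // ∃ M', good i M'} => i.2
  refine ⟨Set.range M', Set.countable_range M', ?_, ?_⟩
  · rintro _ ⟨i, rfl⟩
    exact (hM' i).1
  rintro γ ⟨M₀, ⟨hmono, hcont, hnn⟩, hγ, hMorse⟩
  have hshift : ∀ t ∈ Set.Ici (1 : ℝ), t + 1 ∈ Set.Ici (1 : ℝ) := fun t ht => by
    simp only [Set.mem_Ici] at ht ⊢; linarith
  obtain ⟨L, Q', M'', hL, -, hM'', hglob⟩ := h 1 le_rfl (fun Q => M₀ (Q + 1) + 1 + Q ^ 4) (by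
    refine ⟨fun s hs t ht hst => ?_, ?_, fun t ht => ?_⟩
    · have h1 := hmono (hshift s hs) (hshift t ht) (by linarith)
      have h2 : s ^ 4 ≤ t ^ 4 := by
        have : 0 ≤ s := zero_le_one.trans hs
        gcongr
      simp only
      linarith
    · have h1 : ContinuousOn (fun Q : ℝ => M₀ (Q + 1)) (Set.Ici 1) :=
        hcont.comp (by fun_prop) hshift
      exact (h1.add continuousOn_const).add (by fun_prop)
    · have := hnn (t + 1) (by linarith)
      positivity)
  set l := ⌈L⌉₊ with hl
  set f : List ℕ := (List.range (l + 3)).map fun j : ℕ => ⌈M₀ (j + 1)⌉₊ with hf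
  have hfval : ∀ Q : ℝ, 0 ≤ Q → Q < l + 2 → f.getD ⌊Q⌋₊ 0 = ⌈M₀ (⌊Q⌋₊ + 1)⌉₊ := by
    intro Q hQ0 hQ
    have : ⌊Q⌋₊ < l + 3 := by
      rw [Nat.floor_lt hQ0]; push_cast; linarith
    simp [hf, List.getD, this]
  have hgood : good (l, f) M'' := by
    refine ⟨hM'', fun Q => M₀ (Q + 1) + 1 + Q ^ 4, fun γ hloc => (hglob _ Set.ordConnected_Ici _ ?_).2, ?_, ?_⟩
    · intro s hs t ht hst htL
      exact hloc s hs t ht hst (htL.trans (Nat.le_ceil L))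
    · intro Q hQ1 hQ
      rw [hfval Q (by linarith) hQ]
      have h1 := (Nat.ceil_lt_add_one (hnn (⌊Q⌋₊ + 1) (by simp))).le
      have h2 := hmono (show (⌊Q⌋₊ + 1 : ℝ) ∈ Set.Ici 1 by simp) (hshift Q hQ1)
        (by linarith [Nat.floor_le (by linarith : 0 ≤ Q)])
      have : 0 ≤ Q ^ 4 := by positivity
      linarith
    · intro Q hQ
      have := hnn (Q + 1) (by linarith [Nat.cast_nonneg (α := ℝ) l])
      simp only
      linarith
  obtain ⟨-, M₁, hloc, hsmall, hlarge⟩ := hM' ⟨(l, f), M'', hgood⟩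
  refine ⟨_, ⟨⟨(l, f), M'', hgood⟩, rfl⟩, hγ, hloc γ ?_⟩
  intro s hs t ht hst hstl
  have hiso := isometric_of_ray hγ
  have hsub : ∀ u ∈ Set.Icc s t, u ∈ Set.Ici (0 : ℝ) := fun u hu => hs.trans hu.1
  refine ⟨⟨?_, fun u hu v hv => ?_⟩, ?_⟩
  · exact (hγ.continuous.comp continuous_real_toNNReal).continuousOn
  · rw [hiso u (hsub u hu) v (hsub v hv)]
    constructor <;> linarith
  · intro Q hQ u hu v hv huv p a b hab hp hpa hpb w hw
    rcases lt_or_ge Q (l + 2) with hlt | hge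
    · obtain ⟨x, hx, hd⟩ := hMorse Q hQ u (hsub u hu) v (hsub v hv) huv p a b hab hp hpa hpb w hw
      refine ⟨x, hx, hd.trans ?_⟩
      have h1 := hsmall Q hQ hlt
      rw [hfval Q (by linarith) hlt] at h1
      have h2 := hmono (show Q ∈ Set.Ici 1 from hQ) (show (⌊Q⌋₊ + 1 : ℝ) ∈ Set.Ici 1 by simp)
        (Nat.lt_floor_add_one Q).le
      exact h2.trans ((Nat.le_ceil _).trans h1)
    · refine ⟨u, ⟨le_rfl, huv⟩, ?_⟩
      have h1 := (hp.2 a ⟨le_rfl, hab⟩ b ⟨hab, le_rfl⟩).1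
      have h2 := (hp.2 a ⟨le_rfl, hab⟩ w hw).2
      rw [hpa, hpb, hiso u (hsub u hu) v (hsub v hv), abs_of_nonneg (by linarith),
        abs_of_nonneg (by linarith)] at h1
      rw [abs_of_nonneg (by linarith [hw.1]), dist_comm, hpa] at h2
      have h3 : b - a ≤ (l + Q) * Q := by
        rw [← div_le_iff₀ (by linarith)]
        simp only at hstl
        linarith [hu.1, hv.2]
      have h4 : Q * (w - a) ≤ Q * ((l + Q) * Q) := by
        gcongr; linarith [hw.2]
      have h5 := hlarge Q hge
      have hl0 : (0 : ℝ) ≤ l := by positivity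
      have h6 : Q ^ 3 * (l + 2) ≤ Q ^ 3 * Q := by gcongr
      have h7 : Q ^ 2 ≤ Q ^ 3 := by nlinarith [sq_nonneg Q]
      have h8 : Q ≤ Q ^ 2 := by nlinarith
      have h9 : (l : ℝ) * Q ^ 2 ≤ l * Q ^ 3 := by gcongr
      nlinarith

end Gauges

section Stationary

open MeasureTheory

variable {G Z : Type*} [Group G] [MulAction G Z] [MeasurableSpace Z]

/-- The maximum principle for stationary measures, for the deficit to the supremum. -/
theorem IsStationary.mul_deficit_le {μ : PMF G} {ν : Measure Z} [IsProbabilityMeasure ν]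
    (hν : IsStationary μ ν) {B : Set Z} (hB : ∀ g : G, MeasurableSet (g • B)) {c : ℝ}
    (hc : ∀ g : G, ν.real (g • B) ≤ c) (h g : G) :
    (μ h).toReal * (c - ν.real ((h⁻¹ * g) • B)) ≤ c - ν.real (g • B) := by
  have hc0 : 0 ≤ c := measureReal_nonneg.trans (hc 1)
  set C := ENNReal.ofReal c with hC
  have hle : ∀ k : G, ν ((k⁻¹ * g) • B) ≤ C := fun k => by
    rw [hC, ENNReal.le_ofReal_iff_toReal_le (measure_ne_top _ _) hc0]
    exact hc _
  have key : ν (g • B) + μ h * (C - ν ((h⁻¹ * g) • B)) ≤ C := by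
    classical
    rw [hν _ (hB g)]
    simp only [smul_smul]
    rw [← tsum_ite_eq h (fun k => μ k * (C - ν ((k⁻¹ * g) • B))), ← ENNReal.tsum_add]
    calc _ ≤ ∑' k, μ k * C := by
          refine ENNReal.tsum_le_tsum fun k => ?_
          split_ifs
          · rw [← mul_add, add_tsub_cancel_of_le (hle k)]
          · rw [add_zero]; gcongr; exact hle k
      _ = C := by rw [ENNReal.tsum_mul_right, μ.tsum_coe, one_mul]
  have hfin : μ h * (C - ν ((h⁻¹ * g) • B)) ≠ ⊤ :=
    ENNReal.mul_ne_top (μ.apply_ne_top h) (ENNReal.sub_ne_top ENNReal.ofReal_ne_top)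
  have := ENNReal.toReal_mono ENNReal.ofReal_ne_top key
  rw [ENNReal.toReal_add (measure_ne_top _ _) hfin, ENNReal.toReal_mul,
    ENNReal.toReal_sub_of_le (hle h) ENNReal.ofReal_ne_top, ENNReal.toReal_ofReal hc0] at this
  simp only [Measure.real] at *
  linarith

/-- If `B` has more than half of the measure of an invariant set, then some translate of `B`
meets itself under any given finite set of translations. -/
theorem IsStationary.exists_translates_inter {μ : PMF G}
    (hμ : Subsemigroup.closure μ.support = ⊤) {ν : Measure Z} [IsProbabilityMeasure ν]
    (hν : IsStationary μ ν) {B W : Set Z} (hB : ∀ g : G, MeasurableSet (g • B))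
    (hBW : ∀ g : G, g • B ⊆ W) (hhalf : ν W / 2 < ν B) {F : Set G} (hF : F.Finite) :
    ∃ g : G, ∀ f₁ ∈ F, ∀ f₂ ∈ F, (((f₁ * g) • B) ∩ ((f₂ * g) • B)).Nonempty := by
  set φ : G → ℝ := fun g => ν.real (g • B) with hφ
  have hbdd : BddAbove (Set.range φ) := ⟨1, by rintro _ ⟨g, rfl⟩; exact measureReal_le_one⟩
  set c := ⨆ g, φ g with hc
  have hφc : ∀ g, φ g ≤ c := le_ciSup hbdd
  have step : ∀ h : G, ∀ ε > 0, ∃ δ > 0, ∀ g, c - δ < φ g → c - ε < φ (h⁻¹ * g) := by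
    intro h
    have hh : h ∈ Subsemigroup.closure μ.support := by rw [hμ]; trivial
    induction hh using Subsemigroup.closure_induction with
    | mem h hh =>
      intro ε hε
      have hpos : 0 < (μ h).toReal :=
        ENNReal.toReal_pos ((PMF.mem_support_iff _ _).1 hh) (μ.apply_ne_top h)
      refine ⟨(μ h).toReal * ε, by positivity, fun g hg => ?_⟩
      have h1 := hν.mul_deficit_le hB hφc h g
      have h2 : (μ h).toReal * (c - φ (h⁻¹ * g)) < (μ h).toReal * ε := by
        simp only [hφ] at hg ⊢; linarith
      have := lt_of_mul_lt_mul_left h2 hpos.le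
      linarith
    | mul x y _ _ hx hy =>
      intro ε hε
      obtain ⟨δ, hδ, h1⟩ := hy ε hε
      obtain ⟨δ', hδ', h2⟩ := hx δ hδ
      refine ⟨δ', hδ', fun g hg => ?_⟩
      rw [mul_inv_rev, mul_assoc]
      exact h1 _ (h2 g hg)
  have fin : ∀ ε > 0, ∃ δ > 0, ∀ g, c - δ < φ g → ∀ h ∈ F, c - ε < φ (h * g) := by
    intro ε hε
    induction F, hF using Set.Finite.induction_on with
    | empty => exact ⟨1, one_pos, fun g _ h hh => hh.elim⟩
    | @insert a s _ _ ih =>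
      obtain ⟨δ, hδ, h1⟩ := ih
      obtain ⟨δ', hδ', h2⟩ := step a⁻¹ ε hε
      rw [inv_inv] at h2
      refine ⟨min δ δ', lt_min hδ hδ', fun g hg h hh => ?_⟩
      rcases hh with rfl | hh
      · exact h2 g (by linarith [min_le_right δ δ'])
      · exact h1 g (by linarith [min_le_left δ δ']) h hh
  have hhalf' : ν.real W / 2 < φ 1 := by
    have := ENNReal.toReal_strict_mono (measure_ne_top ν B) hhalf
    rw [ENNReal.toReal_div] at this
    simpa [hφ, Measure.real] using this
  obtain ⟨δ, hδ, hfin⟩ := fin (c - ν.real W / 2) (by linarith [hφc 1])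
  obtain ⟨g, hg⟩ := exists_lt_of_lt_ciSup (show c - δ < ⨆ g, φ g by rw [← hc]; linarith)
  refine ⟨g, fun f₁ hf₁ f₂ hf₂ => ?_⟩
  rw [Set.nonempty_iff_ne_empty, ne_eq, ← Set.disjoint_iff_inter_eq_empty]
  intro hdis
  have h1 := hfin g hg f₁ hf₁
  have h2 := hfin g hg f₂ hf₂
  have h3 := measureReal_union (μ := ν) hdis (hB (f₂ * g))
  have h4 : ν.real ((f₁ * g) • B ∪ (f₂ * g) • B) ≤ ν.real W :=
    measureReal_mono (Set.union_subset (hBW _) (hBW _))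
  simp only [hφ] at h1 h2
  linarith

end Stationary

section Rays

variable {G X : Type*} [Group G] [MetricSpace X] [MulAction G X]

theorem QGeoOn.smul (hG : ∀ g : G, Isometry fun x : X => g • x) (g : G) {Q : ℝ} {I : Set ℝ}
    {p : ℝ → X} (h : QGeoOn Q I p) : QGeoOn Q I fun t => g • p t := by
  refine ⟨(hG g).continuous.comp_continuousOn h.1, fun s hs t ht => ?_⟩
  rw [(hG g).dist_eq]
  exact h.2 s hs t ht

theorem IsMorseRayWith.smul (hG : ∀ g : G, Isometry fun x : X => g • x) (g : G) {M : ℝ → ℝ}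
    {γ : ℝ≥0 → X} (h : IsMorseRayWith M γ) : IsMorseRayWith M fun t => g • γ t := by
  refine ⟨(hG g).comp h.1, fun Q hQ s hs t ht hst p a b hab hp hpa hpb u hu => ?_⟩
  obtain ⟨v, hv, hd⟩ := h.2 Q hQ s hs t ht hst _ a b hab (hp.smul hG g⁻¹)
    (by simp [hpa]) (by simp [hpb]) u hu
  refine ⟨v, hv, ?_⟩
  rw [← (hG g).dist_eq] at hd
  simpa using hd

theorem smul_mem_orbitMorseRays (hG : ∀ g : G, Isometry fun x : X => g • x) (g : G) {x₀ : X}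
    {γ : ℝ≥0 → X} (h : γ ∈ orbitMorseRays G x₀) :
    (fun t => g • γ t) ∈ orbitMorseRays G x₀ := by
  obtain ⟨⟨k, hk⟩, M, hM, hγ⟩ := h
  exact ⟨⟨g * k, by simp only [mul_smul, ← hk]⟩, M, hM, hγ.smul hG g⟩

theorem morseRaysFrom_subset_orbitMorseRays {M : ℝ → ℝ} (hM : IsMorseGauge M) (x₀ : X) :
    morseRaysFrom M x₀ ⊆ orbitMorseRays G x₀ :=
  fun _ h => ⟨⟨1, by simp [h.1]⟩, M, hM, h.2⟩

/-- The starting points of asymptotic Morse rays are joined by a quasi-geodesic all of whose pairs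
of points are Morse. -/
theorem exists_rigid_path_of_asymptotic {X : Type*} [MetricSpace X] (hX : IsGeodesicSpace X)
    (N : ℝ → ℝ) : ∃ N' : ℝ → ℝ, ∀ α β : ℝ≥0 → X, Isometry α → Isometry β →
      (∀ s t, Rigid N (α s) (α t)) → (∀ s t, Rigid N (β s) (β t)) →
      Metric.hausdorffEDist (Set.range α) (Set.range β) ≠ ⊤ →
      ∃ P, QPath 9 (α 0) (β 0) P ∧ ∀ u ∈ P, ∀ v ∈ P, Rigid N' u v := by
  obtain ⟨N', hN'⟩ := exists_rigid_path hX N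
  refine ⟨N', fun α β hα hβ hαN hβN hfin => ?_⟩
  obtain ⟨e, he⟩ := ENNReal.lt_iff_exists_nnreal_btwn.1 (lt_top_iff_ne_top.2 hfin)
  replace he := he.1
  set T : ℝ := 6 * (dist (α 0) (β 0) + e + 1) with hT
  have hT0 : 0 ≤ T := by positivity
  obtain ⟨_, ⟨t, rfl⟩, ht⟩ := Metric.exists_edist_lt_of_hausdorffEDist_lt
    (Set.mem_range_self T.toNNReal) he
  rw [edist_lt_coe, ← NNReal.coe_lt_coe, coe_nndist] at ht
  have hα' := isometric_of_ray hα
  have h1 := seg_of_isometric (η := fun t : ℝ => α t.toNNReal) hT0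
    fun u hu v hv => hα' u hu.1 v hv.1
  have h2 := seg_of_isometric (η := fun t : ℝ => β t.toNNReal) t.2
    fun u hu v hv => isometric_of_ray hβ u hu.1 v hv.1
  simp only [Real.toNNReal_zero, Real.toNNReal_coe, NNReal.val_eq_coe] at h1 h2
  refine hN' _ _ _ _ _ _ h1 h2 ?_ ?_ ?_
  · rintro _ ⟨u, -, rfl⟩ _ ⟨v, -, rfl⟩
    exact hαN _ _
  · rintro _ ⟨u, -, rfl⟩ _ ⟨v, -, rfl⟩
    exact hβN _ _
  · have h3 := hα' 0 Set.self_mem_Ici T hT0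
    rw [Real.toNNReal_zero, sub_zero, abs_of_nonneg hT0] at h3
    rw [h3]
    linarith

theorem IsGeometricAction.countable (hG : IsGeometricAction G X) (x₀ : X) : Countable G := by
  rw [← Set.countable_univ_iff]
  refine (Set.countable_iUnion fun n : ℕ => (hG.2.1 x₀ n).countable).mono fun g _ => ?_
  obtain ⟨n, hn⟩ := exists_nat_ge (dist x₀ (g • x₀))
  exact Set.mem_iUnion.2 ⟨n, hn⟩

end Rays

end MorseLTG

open MorseLTG in
theorem stmt12 {G : Type*} [Group G] [Group.FG G]
    {X : Type*} [MetricSpace X] [ProperSpace X] (hX : IsGeodesicSpace X) (x₀ : X)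
    [MulAction G X] (hGX : IsGeometricAction G X)
    (hnh : ¬ GromovHyperbolic X) (hmltg : MLTG X)
    {X' : Type*} [MetricSpace X'] (hX' : IsGeodesicSpace X')
    [MulAction G X'] (hGX' : IsGeometricAction G X')
    (hcontr : ∃ γ : ℝ≥0 → X', IsStronglyContractingRay γ)
    {Z : Type*} [TopologicalSpace Z] [TopologicalSpace.MetrizableSpace Z]
    [MeasurableSpace Z] [BorelSpace Z] [MulAction G Z] [ContinuousConstSMul G Z]
    (ρ : (ℝ≥0 → X) → Z)
    (hsep : ∀ γ₁ ∈ orbitMorseRays G x₀, ∀ γ₂ ∈ orbitMorseRays G x₀,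
      Metric.hausdorffEDist (Set.range γ₁) (Set.range γ₂) = ⊤ → ρ γ₁ ≠ ρ γ₂)
    (hequi : ∀ g : G, ∀ γ ∈ orbitMorseRays G x₀, ρ (fun t => g • γ t) = g • ρ γ)
    (hcpt : ∀ M : ℝ → ℝ, IsMorseGauge M → IsCompact (ρ '' morseRaysFrom M x₀))
    (μ : PMF G) (hμ : Subsemigroup.closure μ.support = ⊤)
    (ν : MeasureTheory.Measure Z) [MeasureTheory.IsProbabilityMeasure ν]
    (hν : IsStationary μ ν) :
    ν (ρ '' orbitMorseRays G x₀) = 0 := by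
  by_contra hpos
  set W := ρ '' orbitMorseRays G x₀ with hW
  have hWinv : ∀ g : G, g • W ⊆ W := by
    rintro g _ ⟨_, ⟨γ, hγ, rfl⟩, rfl⟩
    exact ⟨_, smul_mem_orbitMorseRays hGX.1 g hγ, hequi g γ hγ⟩
  -- exhaust `W` by countably many compact sets
  obtain ⟨𝓜, h𝓜c, h𝓜, hcover⟩ := hmltg.exists_countable_gauges
  have := hGX.countable x₀
  have := h𝓜c.to_subtype
  let E : G × 𝓜 → Set Z := fun i => i.1 • ρ '' morseRaysFrom i.2.1 x₀
  have hEcpt : ∀ i, IsCompact (E i) := fun i => (hcpt _ (h𝓜 _ i.2.2)).smul i.1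
  have hEW : ∀ i, E i ⊆ W := fun i => (Set.smul_set_mono
    (Set.image_mono (morseRaysFrom_subset_orbitMorseRays (h𝓜 _ i.2.2) x₀))).trans (hWinv i.1)
  have hWE : W ⊆ ⋃ i, E i := by
    rintro _ ⟨γ, hγ, rfl⟩
    obtain ⟨⟨g, hg⟩, hM⟩ := hγ
    obtain ⟨M, hM𝓜, hMγ⟩ := hcover γ hM
    have h1 : (fun t => g⁻¹ • γ t) ∈ morseRaysFrom M x₀ :=
      ⟨by simp only [← hg, inv_smul_smul], hMγ.smul hGX.1 g⁻¹⟩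
    refine Set.mem_iUnion.2 ⟨(g, ⟨M, hM𝓜⟩), g⁻¹ • ρ γ, ⟨_, h1, ?_⟩, by simp⟩
    exact hequi g⁻¹ γ ⟨⟨g, hg⟩, hM⟩
  have hWeq : W = ⋃ i, E i := hWE.antisymm (Set.iUnion_subset hEW)
  have hne : Nonempty (G × 𝓜) := by
    by_contra hemp
    rw [not_nonempty_iff] at hemp
    rw [hWeq, Set.iUnion_of_empty] at hpos
    exact hpos MeasureTheory.measure_empty
  obtain ⟨e, he⟩ := exists_surjective_nat (G × 𝓜)
  obtain ⟨n, hn⟩ : ∃ n, ν W / 2 < ν (Set.accumulate (fun i => E (e i)) n) := by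
    rw [← lt_iSup_iff, ← MeasureTheory.measure_iUnion_eq_iSup_accumulate,
      he.iUnion_comp (g := E), ← hWeq]
    exact ENNReal.half_lt_self hpos (MeasureTheory.measure_ne_top _ _)
  set B := Set.accumulate (fun i => E (e i)) n with hB
  have hBcpt : IsCompact B := (Set.finite_Iic n).isCompact_biUnion fun i _ => hEcpt (e i)
  have hBm : ∀ g : G, MeasurableSet (g • B) := fun g => (hBcpt.smul g).isClosed.measurableSet
  have hBW : ∀ g : G, g • B ⊆ W := fun g => (Set.smul_set_mono
    (Set.iUnion₂_subset fun i _ => hEW (e i))).trans (hWinv g)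
  -- uniform constants for the finitely many compact sets whose union is `B`
  choose N hN using fun i : ℕ => IsMorseRayWith.rigid hX (e i).2.1
  set N₀ : ℝ → ℝ := fun Q => ∑ i ∈ Finset.range (n + 1), |N i Q| with hN₀
  have hNN₀ : ∀ i ≤ n, ∀ Q, N i Q ≤ N₀ Q := fun i hi Q => (le_abs_self _).trans
    (Finset.single_le_sum (f := fun i => |N i Q|) (fun _ _ => abs_nonneg _)
      (Finset.mem_range.2 (by omega)))
  set d : ℝ := ∑ i ∈ Finset.range (n + 1), dist x₀ ((e i).1 • x₀) with hd
  have hd0 : 0 ≤ d := Finset.sum_nonneg fun _ _ => dist_nonneg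
  have hdd : ∀ i ≤ n, dist x₀ ((e i).1 • x₀) ≤ d := fun i hi =>
    Finset.single_le_sum (f := fun i => dist x₀ ((e i).1 • x₀)) (fun _ _ => dist_nonneg)
      (Finset.mem_range.2 (by omega))
  obtain ⟨N₁, hN₁⟩ := exists_rigid_path_of_asymptotic hX N₀
  -- the geometry of the space with contraction
  obtain ⟨γ₀, hγ₀⟩ := hcontr
  set o := γ₀ 0 with ho
  obtain ⟨f, A, hA, hf₁, hf₂, hf₃⟩ := exists_quasi_isometry hX' hGX' o hX hGX x₀
  obtain ⟨f', A', hA', hf'₁, hf'₂, hf'₃⟩ := exists_quasi_isometry hX hGX x₀ hX' hGX' o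
  have hne' : ¬ ∃ N : ℝ → ℝ, ∀ p : G, Rigid N o (p • o) := by
    rintro ⟨N, hN⟩
    obtain ⟨N', hN'⟩ := Rigid.perturb hX' N (k := A') (by linarith)
    refine hnh (hGX.gromovHyperbolic hX x₀ _ fun g => Rigid.of_map hA' hf'₁ hf'₂
      (hN' o (g • o) _ _ (hN g) ?_ ?_))
    · simpa using hf'₃ 1 x₀
    · simpa using hf'₃ g (g • x₀)
  obtain ⟨C, D, hC, hpass⟩ := exists_finite_set_pass hX' hGX'.1 o (hGX'.exists_dist_le o)
    ⟨γ₀, hγ₀⟩ hne'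
  obtain ⟨Q', hQ', -, hext⟩ := QPath.extend hX (2 * 1 * A) (k := A + d) (by linarith)
    (by linarith)
  set Q'' := max Q' 9 with hQ''
  set k := A * C + A + |N₁ Q''| with hk
  have hk0 : 0 ≤ k := by positivity
  obtain ⟨N₂, hN₂⟩ := Rigid.perturb hX N₁ hk0
  -- an element which is not Morse
  obtain ⟨A₂, hA₂, horb⟩ := hGX'.orbit_dist_le hX' o hGX.1 x₀
  obtain ⟨w, hw⟩ : ∃ w : G, ¬ Rigid (fun Q => max (N₂ Q)
      (Q * (Q * (A₂ * D + A₂) + Q) + Q)) x₀ (w • x₀) := by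
    by_contra hcon
    push Not at hcon
    exact hnh (hGX.gromovHyperbolic hX x₀ _ hcon)
  have hwD : D < dist o (w • o) := by
    by_contra hcon
    push Not at hcon
    refine hw ((rigid_of_dist_le (A₂ * D + A₂) ?_).mono fun Q => le_max_right _ _)
    have h1 := horb 1 w
    rw [one_smul, one_smul] at h1
    have h2 : A₂ * dist o (w • o) ≤ A₂ * D := by gcongr
    linarith
  refine hw (Rigid.mono ?_ fun Q => le_max_left _ _)
  obtain ⟨F, hF, hFpass⟩ := hpass w hwD
  obtain ⟨g, hg⟩ := hν.exists_translates_inter hμ hBm hBW hn hF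
  obtain ⟨f₁, hf₁F, f₂, hf₂F, hseg⟩ := hFpass (g • o)
  obtain ⟨z, ⟨z₁, hz₁, hz₁z⟩, ⟨z₂, hz₂, hz₂z⟩⟩ := hg f₁ hf₁F f₂ hf₂F
  -- a point of `B` is the endpoint of a uniformly Morse ray
  have hBray : ∀ z ∈ B, ∀ h : G, ∃ i ≤ n, ∃ α ∈ orbitMorseRays G x₀, ρ α = h • z ∧
      α 0 = h • (e i).1 • x₀ ∧ ∀ s t, Rigid N₀ (α s) (α t) := by
    intro z hz h
    obtain ⟨i, hi, _, ⟨α, hα, rfl⟩, rfl⟩ := Set.mem_iUnion₂.1 hz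
    have hα' := morseRaysFrom_subset_orbitMorseRays (G := G) (h𝓜 _ (e i).2.2) x₀ hα
    have hα'' := smul_mem_orbitMorseRays hGX.1 (e i).1 hα'
    refine ⟨i, hi, _, smul_mem_orbitMorseRays hGX.1 h hα'', ?_, ?_, fun s t => ?_⟩
    · rw [hequi h _ hα'', hequi _ _ hα']
    · simp only [hα.1]
    · exact (((hN i α hα.2 s t).mono (hNN₀ i hi)).smul hGX.1 (e i).1).smul hGX.1 h
  obtain ⟨i, hi, α, hα, hαz, hα0, hαN⟩ := hBray z₁ hz₁ (f₁ * g)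
  obtain ⟨j, hj, β, hβ, hβz, hβ0, hβN⟩ := hBray z₂ hz₂ (f₂ * g)
  have hρ : ρ α = ρ β := by
    rw [hαz, hβz]; exact hz₁z.trans hz₂z.symm
  obtain ⟨P, hP, hPN⟩ := hN₁ α β hα.2.choose_spec.2.1 hβ.2.choose_spec.2.1 hαN hβN
    fun htop => hsep α hα β hβ htop hρ
  obtain ⟨S, hS⟩ := hX'.exists_seg (f₁ • g • o) (f₂ • g • o)
  obtain ⟨⟨m₁, hm₁S, hm₁⟩, ⟨m₂, hm₂S, hm₂⟩⟩ := hseg S hS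
  have hends : ∀ h : G, ∀ i ≤ n, dist ((h * g) • (e i).1 • x₀) (f (h • g • o)) ≤ A + d := by
    intro h i hi
    have h1 := hf₃ (h * g) (h • g • o)
    rw [smul_smul h g o, dist_self, mul_zero, zero_add] at h1
    have h2 := dist_triangle_right ((h * g) • (e i).1 • x₀) (f (h • g • o)) ((h * g) • x₀)
    rw [(hGX.1 (h * g)).dist_eq, dist_comm _ x₀, smul_smul h g o] at h2
    rw [smul_smul h g o]
    linarith [hdd i hi]
  obtain ⟨S', hSS', hS', -⟩ := hext _ _ _ _ _ (hS.qpath.map hA le_rfl hf₁ hf₂)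
    (hends f₁ i hi) (hends f₂ j hj)
  rw [← hα0, ← hβ0] at hS'
  have hnear := hPN _ hP.left_mem _ hP.right_mem Q'' (hQ'.trans (le_max_left _ _)) S' P
    (hS'.mono (le_max_left _ _)) (hP.mono (le_max_right _ _))
  have hclose : ∀ m ∈ S, ∀ h : G, dist m (h • o) ≤ C → ∃ u ∈ P, dist (h • x₀) u ≤ k := by
    intro m hm h hmh
    obtain ⟨u, hu, hmu⟩ := hnear (f m) (hSS' ⟨m, hm, rfl⟩)
    refine ⟨u, hu, ?_⟩
    have h1 := hf₃ h m
    have h2 : A * dist m (h • o) ≤ A * C := by gcongr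
    have h3 := dist_triangle (h • x₀) (f m) u
    rw [dist_comm (h • x₀) (f m)] at h3
    linarith [le_abs_self (N₁ Q'')]
  obtain ⟨u₁, hu₁, hd₁⟩ := hclose m₁ hm₁S 1 (by simpa using hm₁)
  obtain ⟨u₂, hu₂, hd₂⟩ := hclose m₂ hm₂S w hm₂
  rw [one_smul] at hd₁
  exact hN₂ u₁ u₂ _ _ (hPN u₁ hu₁ u₂ hu₂) hd₁ hd₂
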